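/- Let A be a polynomial over ℂ of degree n ≥ 2 that is not special. Then there exists an integer M (depending on A) such that for every integer s ≥ 1 and all polynomials X, Y over ℂ with A^{∘s} = X∘Y, there exist a polynomial X₀ with deg X₀ ≤ M and an integer ℓ with 0 ≤ ℓ ≤ s such that X = A^{∘ℓ}∘X₀ and A^{∘(s−ℓ)} = X₀∘Y. -/

import Mathlib

/-!
Let `A^{∘s} = X ∘ Y` with `deg X` large. If `deg A` divides `deg X`, then Engstrom's theorem
(`engstrom`: two decompositions of one polynomial share a left factor whose degree is the gcd of the
degrees of the left factors) makes `A` a left factor of `X`, and `exists_strip` gives `X = A ∘ X'`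
with `A^{∘(s-1)} = X' ∘ Y`; induction on `s` concludes. So it suffices to show
(`natDegree_dvd_of_large`) that `deg A ∣ deg X` once `deg X` exceeds a bound depending on `deg A`
alone.

Suppose a prime `p` divides `deg X` less often than `deg A`. For a `k` depending on `deg A` alone, splitting off the common
left factor of `A^{∘k}` and `X` yields `A^{∘k} = W ∘ A₁` and `A₁ ∘ A^{∘(s-k)} = X₁ ∘ Y`, where
`deg A₁` and `deg X₁` are coprime, `p ^ k ∣ deg A₁`, and `deg X₁ ≥ 12 deg A₁`. A genus-type
argument (`key_coprime`) then shows that `A₁` is `z^a` or `T_a` up to affine maps on both sides. Its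
input is `fiber_prod`, a computation of norms saying that the fibers of the two right factors are
equidistributed over pairs `(u, v)` with `A₁(u) = X₁(v)`. Hence, outside a set of fewer than
`2 deg A₁` points, `X₁` ramifies at least as much as `A₁` does over each critical value of `A₁`, and
the Riemann-Hurwitz inequality for `X₁` leaves room only for one critical value (a power) or for two
critical values with simple critical points (a Chebyshev polynomial).

Finally, approximate roots are unique, so the iterates `A^{∘j}` with `j ≤ 4`, being right factors of
`W ∘ A₁` of smaller degree than `A₁`, are themselves powers or Chebyshev polynomials up to affine maps
(`IsRigid.rigid`), after one conjugation common to all `j`. Comparing `A`, `A^{∘2}` and `A^{∘4}` shows that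
`A` is special.
-/

open Polynomial

/-- The `k`-th compositional iterate `A^{∘k}` of a polynomial, with `A^{∘0} = X`. -/
noncomputable def polyIter (A : Polynomial ℂ) : ℕ → Polynomial ℂ
  | 0 => Polynomial.X
  | k + 1 => A.comp (polyIter A k)

/-- `A` is linearly conjugate to `P`: `A∘μ = μ∘P` for some degree-one polynomial `μ`. -/
def LinConj (A P : Polynomial ℂ) : Prop :=
  ∃ μ : Polynomial ℂ, μ.degree = 1 ∧ A.comp μ = μ.comp P

/-- A polynomial of degree `n` is special if it is linearly conjugate to `z^n`, `T_n`, or `-T_n`. -/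
def SpecialPoly (A : Polynomial ℂ) : Prop :=
  LinConj A (Polynomial.X ^ A.natDegree) ∨
    LinConj A (Polynomial.Chebyshev.T ℂ (A.natDegree : ℤ)) ∨
      LinConj A (-(Polynomial.Chebyshev.T ℂ (A.natDegree : ℤ)))

/-! ### Approximate roots -/

/-- With `d` summands the cofactor of `U - V` in `U ^ d - V ^ d` has exact degree `(d - 1) * m`:
no cancellation happens among the leading terms, all equal. -/
theorem geomSum_coeff {U V : ℂ[X]} {d m : ℕ} (hU : U.natDegree = m) (hV : V.natDegree = m)
    (hlc : U.leadingCoeff = V.leadingCoeff) :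
    (∑ i ∈ Finset.range d, U ^ i * V ^ (d - 1 - i)).coeff ((d - 1) * m)
      = d * U.leadingCoeff ^ (d - 1) := by
  rw [finsetSum_coeff]
  have : ∀ i ∈ Finset.range d, (U ^ i * V ^ (d - 1 - i)).coeff ((d - 1) * m)
      = U.leadingCoeff ^ (d - 1) := by
    intro i hi
    have hi' : i ≤ d - 1 := by have := Finset.mem_range.1 hi; omega
    have e1 : (d - 1) * m = i * m + (d - 1 - i) * m := by rw [← add_mul]; congr 1; omega
    have h1 : (U ^ i).coeff (i * m) = U.leadingCoeff ^ i := by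
      rw [← leadingCoeff_pow, leadingCoeff, natDegree_pow, hU]
    have h2 : (V ^ (d - 1 - i)).coeff ((d - 1 - i) * m) = U.leadingCoeff ^ (d - 1 - i) := by
      rw [hlc, ← leadingCoeff_pow, leadingCoeff, natDegree_pow, hV]
    rw [e1, coeff_mul_add_eq_of_natDegree_le (by rw [natDegree_pow, hU])
      (by rw [natDegree_pow, hV]), h1, h2, ← pow_add]
    congr 1; omega
  rw [Finset.sum_congr rfl this]; simp

theorem geomSum_degree_le {U V : ℂ[X]} {d m : ℕ} (hU : U.natDegree = m) (hV : V.natDegree = m) :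
    (∑ i ∈ Finset.range d, U ^ i * V ^ (d - 1 - i)).natDegree ≤ (d - 1) * m := by
  apply natDegree_sum_le_of_forall_le
  intro i hi
  have hi' : i ≤ d - 1 := by have := Finset.mem_range.1 hi; omega
  have e1 : (d - 1) * m = i * m + (d - 1 - i) * m := by rw [← add_mul]; congr 1; omega
  rw [e1]
  exact natDegree_mul_le_of_le (by rw [natDegree_pow, hU]) (by rw [natDegree_pow, hV])

/-- A `d`-th root is determined, up to its leading coefficient, by the top part of the `d`-th power. -/
theorem eq_of_pow_sub_pow_small {U V : ℂ[X]} {d m : ℕ} (hd : 1 ≤ d)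
    (hU : U.natDegree = m) (hV : V.natDegree = m) (hm : 1 ≤ m)
    (hlc : U.leadingCoeff = V.leadingCoeff)
    (h : (U ^ d - V ^ d).degree < ((d - 1) * m : ℕ)) : U = V := by
  by_contra hne
  have hU0 : U ≠ 0 := by rintro rfl; simp at hU; omega
  have hV0 : V ≠ 0 := by rintro rfl; simp at hV; omega
  set S : ℂ[X] := ∑ i ∈ Finset.range d, U ^ i * V ^ (d - 1 - i) with hS
  have hmul : S * (U - V) = U ^ d - V ^ d := (Commute.all U V).geom_sum₂_mul d
  have hne0 : S.coeff ((d - 1) * m) ≠ 0 := by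
    rw [hS, geomSum_coeff hU hV hlc]
    exact mul_ne_zero (by exact_mod_cast (by omega : d ≠ 0))
      (pow_ne_zero _ (leadingCoeff_ne_zero.2 hU0))
  have h1 : (((d - 1) * m : ℕ) : WithBot ℕ) ≤ S.degree := le_degree_of_ne_zero hne0
  have h2 : S.degree ≤ (U ^ d - V ^ d).degree := by
    rw [← hmul, degree_mul]
    exact le_add_of_nonneg_right (zero_le_degree_iff.2 (sub_ne_zero.2 hne))
  exact absurd (h1.trans h2) (not_le.2 h)

theorem exists_root_smul {U V : ℂ[X]} {d m : ℕ} (hd : 1 ≤ d)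
    (hU : U.natDegree = m) (hV : V.natDegree = m) (hm : 1 ≤ m)
    (h : (U ^ d - V ^ d).degree < ((d - 1) * m : ℕ)) : ∃ ω : ℂ, ω ≠ 0 ∧ U = C ω * V := by
  have hU0 : U ≠ 0 := by rintro rfl; simp at hU; omega
  have hV0 : V ≠ 0 := by rintro rfl; simp at hV; omega
  have hlu := leadingCoeff_ne_zero.2 hU0
  have hlv := leadingCoeff_ne_zero.2 hV0
  have hpow : U.leadingCoeff ^ d = V.leadingCoeff ^ d := by
    have hz : (U ^ d - V ^ d).coeff (d * m) = 0 := by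
      apply coeff_eq_zero_of_degree_lt
      refine lt_of_lt_of_le h ?_
      exact_mod_cast Nat.mul_le_mul_right m (by omega : d - 1 ≤ d)
    rw [coeff_sub, sub_eq_zero] at hz
    have e1 : (U ^ d).coeff (d * m) = U.leadingCoeff ^ d := by
      rw [← leadingCoeff_pow, leadingCoeff, natDegree_pow, hU]
    have e2 : (V ^ d).coeff (d * m) = V.leadingCoeff ^ d := by
      rw [← leadingCoeff_pow, leadingCoeff, natDegree_pow, hV]
    rw [← e1, ← e2, hz]
  refine ⟨U.leadingCoeff / V.leadingCoeff, div_ne_zero hlu hlv, ?_⟩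
  have hw : U.leadingCoeff / V.leadingCoeff ≠ 0 := div_ne_zero hlu hlv
  apply eq_of_pow_sub_pow_small hd hU (by rw [natDegree_C_mul hw, hV]) hm
  · rw [leadingCoeff_mul, leadingCoeff_C]; field_simp
  · rw [mul_pow, ← C_pow, div_pow, hpow, div_self (pow_ne_zero _ hlv)]
    simpa using h

/-- The approximate `g`-th root of `G`: a polynomial of degree `g * e` agrees in its top `e + 1`
coefficients with a scalar multiple of a `g`-th power. -/
theorem exists_approx_root {G : ℂ[X]} {g e : ℕ} (hg : 1 ≤ g) (hG : G.natDegree = g * e)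
    (hG0 : G ≠ 0) :
    ∃ H : ℂ[X], H.Monic ∧ H.natDegree = e ∧
      (G - C G.leadingCoeff * H ^ g).degree < ((g - 1) * e : ℕ) := by
  have hγ := leadingCoeff_ne_zero.2 hG0
  have hg0 : (g : ℂ) ≠ 0 := by exact_mod_cast (by omega : g ≠ 0)
  -- the coefficients of `H` are found one at a time, from the top down
  have key : ∀ j, j ≤ e → ∃ H : ℂ[X], H.Monic ∧ H.natDegree = e ∧
      (G - C G.leadingCoeff * H ^ g).degree < (g * e - j : ℕ) := by
    intro j
    induction j with
    | zero =>
      intro _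
      refine ⟨X ^ e, monic_X_pow e, natDegree_X_pow e, ?_⟩
      have : G.degree = ((g * e : ℕ) : WithBot ℕ) := by rw [degree_eq_natDegree hG0, hG]
      rw [Nat.sub_zero, ← this, ← pow_mul]
      apply degree_sub_lt_left _ hG0
      · simp
      · rw [degree_C_mul_X_pow _ hγ, this, mul_comm]
    | succ j ih =>
      intro hj
      obtain ⟨H, hm, hd, hlt⟩ := ih (by omega)
      have hge : e ≤ g * e := Nat.le_mul_of_pos_left e hg
      have hsplit : g * e = (g - 1) * e + e := by
        rw [← Nat.succ_mul]; congr 1; omega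
      set c := (G - C G.leadingCoeff * H ^ g).coeff (g * e - (j + 1)) with hc
      set δ : ℂ := c / (g * G.leadingCoeff) with hδ
      set D : ℂ[X] := C δ * X ^ (e - (j + 1)) with hD
      have hDlt : D.degree < H.degree := by
        rw [degree_eq_natDegree hm.ne_zero, hd]
        refine lt_of_le_of_lt (degree_C_mul_X_pow_le _ _) ?_
        exact_mod_cast (by omega : e - (j + 1) < e)
      have hm' : (H + D).Monic := hm.add_of_left hDlt
      have hd' : (H + D).natDegree = e := by rw [natDegree_add_eq_left_of_degree_lt hDlt, hd]
      refine ⟨H + D, hm', hd', ?_⟩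
      have hgs : (∑ i ∈ Finset.range g, (H + D) ^ i * H ^ (g - 1 - i)) * D
          = (H + D) ^ g - H ^ g := by
        have := (Commute.all (H + D) H).geom_sum₂_mul g
        rwa [add_sub_cancel_left] at this
      set S := ∑ i ∈ Finset.range g, (H + D) ^ i * H ^ (g - 1 - i)
      have hSc : S.coeff ((g - 1) * e) = g := by
        have := geomSum_coeff (d := g) hd' hd (by rw [hm'.leadingCoeff, hm.leadingCoeff])
        rw [this, hm'.leadingCoeff]; simp
      have hSd : S.natDegree ≤ (g - 1) * e := geomSum_degree_le hd' hd
      have hexp : g * e - (j + 1) = (g - 1) * e + (e - (j + 1)) := by omega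
      have hDd : D.natDegree ≤ e - (j + 1) := natDegree_C_mul_X_pow_le _ _
      have heq : G - C G.leadingCoeff * (H + D) ^ g
          = (G - C G.leadingCoeff * H ^ g) - C G.leadingCoeff * (S * D) := by
        rw [hgs]; ring
      rw [heq, degree_lt_iff_coeff_zero]
      intro i hi
      rcases Nat.eq_or_lt_of_le hi with h | h
      · rw [← h, coeff_sub, ← hc, coeff_C_mul, hexp, coeff_mul_add_eq_of_natDegree_le hSd hDd,
          hSc, hD, coeff_C_mul_X_pow, if_pos rfl, hδ]
        field_simp; ring
      · rw [coeff_sub, coeff_eq_zero_of_degree_lt, coeff_C_mul, coeff_eq_zero_of_natDegree_lt]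
        · ring
        · exact lt_of_le_of_lt (natDegree_mul_le_of_le hSd hDd) (by omega)
        · exact lt_of_lt_of_le hlt (by exact_mod_cast (by omega : g * e - j ≤ i))
  obtain ⟨H, h1, h2, h3⟩ := key e le_rfl
  refine ⟨H, h1, h2, ?_⟩
  rwa [show (g - 1) * e = g * e - e by rw [Nat.sub_mul, one_mul]]

theorem degree_comp_lt {P Q : ℂ[X]} {k m : ℕ} (hP : P.degree < (k : ℕ)) (hQ : Q.natDegree = m)
    (hm : 1 ≤ m) : (P.comp Q).degree < (k * m : ℕ) := by
  by_cases h : P = 0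
  · rw [h, zero_comp, degree_zero]; exact WithBot.bot_lt_coe _
  · rw [degree_eq_natDegree h] at hP
    have hP' : P.natDegree < k := by exact_mod_cast hP
    refine lt_of_le_of_lt degree_le_natDegree ?_
    rw [natDegree_comp, hQ]
    exact_mod_cast Nat.mul_lt_mul_of_pos_right hP' hm

/-- Two right factors with a common left factor differ by an affine map. With
`X + c` the approximate root of `G` of degree one, `U + c` and `V + c` have `d`-th powers agreeing in
high degree, where `d = deg G`. -/
theorem exists_affine_of_comp_eq {G U V : ℂ[X]} (hG : 1 ≤ G.natDegree)
    (hU : 1 ≤ U.natDegree) (h : G.comp U = G.comp V) :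
    ∃ η β : ℂ, η ≠ 0 ∧ U = (C η * X + C β).comp V := by
  have hG0 : G ≠ 0 := by rintro rfl; simp at hG
  have hdeg : U.natDegree = V.natDegree := by
    have := congrArg natDegree h
    rw [natDegree_comp, natDegree_comp] at this
    exact Nat.eq_of_mul_eq_mul_left hG this
  obtain ⟨H, hHm, hHd, hlt⟩ := exists_approx_root (G := G) (e := 1) hG (by ring) hG0
  obtain ⟨c, rfl⟩ : ∃ c, H = X + C c := ⟨_, hHm.eq_X_add_C hHd⟩
  set ρ := G - C G.leadingCoeff * (X + C c) ^ G.natDegree with hρ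
  have hGe : G = C G.leadingCoeff * (X + C c) ^ G.natDegree + ρ := by rw [hρ]; ring
  have e : ∀ W : ℂ[X], G.comp W = C G.leadingCoeff * (W + C c) ^ G.natDegree + ρ.comp W := by
    intro W; conv_lhs => rw [hGe]
    simp
  obtain ⟨ω, hω, hωe⟩ := exists_root_smul (U := U + C c) (V := V + C c) (m := U.natDegree)
    hG (by simp) (by simp [hdeg]) hU (by
      have h1 : C G.leadingCoeff * ((U + C c) ^ G.natDegree - (V + C c) ^ G.natDegree)
          = ρ.comp V - ρ.comp U := by
        have := h; rw [e, e] at this; linear_combination this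
      rw [← degree_C_mul (leadingCoeff_ne_zero.2 hG0), h1]
      rw [mul_one] at hlt
      exact lt_of_le_of_lt (degree_sub_le _ _) (max_lt (degree_comp_lt hlt hdeg.symm hU)
        (degree_comp_lt hlt rfl hU)))
  refine ⟨ω, ω * c - c, hω, ?_⟩
  simp only [add_comp, sub_comp, mul_comp, C_comp, X_comp, C_sub, C_mul]
  linear_combination hωe

theorem comp_right_cancel {F G Q : ℂ[X]} (hQ : 1 ≤ Q.natDegree) (h : F.comp Q = G.comp Q) :
    F = G := by
  have : (F - G).comp Q = 0 := by rw [sub_comp, h, sub_self]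
  rcases comp_eq_zero_iff.1 this with h | h
  · exact sub_eq_zero.1 h
  · rw [h.2] at hQ; simp at hQ

/-! ### Common left factors of two decompositions -/

/-- If the degrees of `A1` and `P1` are coprime and `A1 ∘ B = P1 ∘ Q`, every further relation
`A ∘ B = P ∘ Q` factors through that one. Dividing `A` by `A1` and `P` by `P1` with remainder, the
quotients and the remainders satisfy relations of the same shape, and coprimality makes the
remainders constant. -/
theorem exists_common_left {A1 B P1 Q : ℂ[X]} (hA1 : 1 ≤ A1.natDegree) (hP1 : 1 ≤ P1.natDegree)
    (hB : 1 ≤ B.natDegree) (hQ : 1 ≤ Q.natDegree)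
    (hco : Nat.Coprime A1.natDegree P1.natDegree) (h1 : A1.comp B = P1.comp Q) :
    ∀ n : ℕ, ∀ A P : ℂ[X], A.natDegree ≤ n → A.comp B = P.comp Q →
      ∃ W : ℂ[X], A = W.comp A1 ∧ P = W.comp P1 := by
  have hBc : ∀ {F G : ℂ[X]}, F.comp B = G.comp B → F = G := comp_right_cancel hB
  have hQc : ∀ {F G : ℂ[X]}, F.comp Q = G.comp Q → F = G := comp_right_cancel hQ
  have hl : A1.natDegree * B.natDegree = P1.natDegree * Q.natDegree := by
    rw [← natDegree_comp, ← natDegree_comp, h1]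
  have hA10 : A1 ≠ 0 := by rintro rfl; simp at hA1
  have hP10 : P1 ≠ 0 := by rintro rfl; simp at hP1
  have hD0 : A1.comp B ≠ 0 := by
    intro h; have := natDegree_comp (p := A1) (q := B); rw [h, natDegree_zero] at this
    have := Nat.mul_pos hA1 hB; omega
  intro n
  induction n with
  | zero =>
    intro A P hA h
    rw [eq_C_of_natDegree_le_zero hA] at h ⊢
    refine ⟨C (A.coeff 0), by simp, ?_⟩
    apply hQc; rw [← h]; simp
  | succ n ih =>
    intro A P hA h
    by_cases hA0 : A.natDegree = 0
    · exact ih A P (by omega) h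
    have eA := EuclideanDomain.div_add_mod A A1
    have eP := EuclideanDomain.div_add_mod P P1
    have hrA : (A % A1).degree < A1.degree := EuclideanDomain.mod_lt A hA10
    have hrP : (P % P1).degree < P1.degree := EuclideanDomain.mod_lt P hP10
    rw [degree_eq_natDegree hA10] at hrA
    rw [degree_eq_natDegree hP10] at hrP
    have hDdeg : (A1.comp B).degree = ((A1.natDegree * B.natDegree : ℕ) : WithBot ℕ) := by
      rw [degree_eq_natDegree hD0, natDegree_comp]
    -- the left side is a multiple of `A1 ∘ B`, the right side has smaller degree
    have key : A1.comp B * ((A / A1).comp B - (P / P1).comp Q)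
        = (P % P1).comp Q - (A % A1).comp B := by
      have := h
      rw [← eA, ← eP] at this
      simp only [add_comp, mul_comp] at this
      rw [← h1] at this
      linear_combination this
    have hz : (P % P1).comp Q - (A % A1).comp B = 0 := by
      apply eq_zero_of_dvd_of_degree_lt (Dvd.intro _ key)
      rw [hDdeg]
      refine lt_of_le_of_lt (degree_sub_le _ _) (max_lt ?_ (degree_comp_lt hrA rfl hB))
      rw [hl]; exact degree_comp_lt hrP rfl hQ
    have hq : (A / A1).comp B = (P / P1).comp Q := by
      rw [hz] at key
      exact sub_eq_zero.1 ((mul_eq_zero.1 key).resolve_left hD0)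
    have hr : (A % A1).comp B = (P % P1).comp Q := (sub_eq_zero.1 hz).symm
    -- the remainders are constant
    have hrd : (A % A1).natDegree * B.natDegree = (P % P1).natDegree * Q.natDegree := by
      rw [← natDegree_comp, ← natDegree_comp, hr]
    have hrA0 : (A % A1).natDegree = 0 := by
      by_contra hne
      -- cross-multiplying the two degree relations
      have h3 : (A % A1).natDegree * P1.natDegree = (P % P1).natDegree * A1.natDegree := by
        have : ((A % A1).natDegree * P1.natDegree) * (B.natDegree * Q.natDegree)
          = ((P % P1).natDegree * A1.natDegree) * (B.natDegree * Q.natDegree) := by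
          calc _ = ((A % A1).natDegree * B.natDegree) * (P1.natDegree * Q.natDegree) := by ring
            _ = _ := by rw [hrd, ← hl]; ring
        exact Nat.eq_of_mul_eq_mul_right (Nat.mul_pos hB hQ) this
      have h4 : A1.natDegree ∣ (A % A1).natDegree :=
        hco.dvd_of_dvd_mul_right ⟨(P % P1).natDegree, by rw [h3, mul_comm]⟩
      have h5 := Nat.le_of_dvd (Nat.pos_of_ne_zero hne) h4
      have h6 : (A % A1).natDegree < A1.natDegree := by
        rw [degree_eq_natDegree (fun h => by rw [h] at hne; simp at hne)] at hrA
        exact_mod_cast hrA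
      omega
    obtain ⟨c, hc⟩ : ∃ c, A % A1 = C c := ⟨_, eq_C_of_natDegree_eq_zero hrA0⟩
    have hc' : P % P1 = C c := by apply hQc; rw [← hr, hc]; simp
    have hdeg : (A / A1).natDegree ≤ n := by
      by_cases h0 : A / A1 = 0
      · rw [h0]; simp
      have : A.natDegree = A1.natDegree + (A / A1).natDegree := by
        conv_lhs => rw [← eA, hc, natDegree_add_C, natDegree_mul hA10 h0]
      omega
    obtain ⟨W, hW1, hW2⟩ := ih (A / A1) (P / P1) hdeg hq
    refine ⟨X * W + C c, ?_, ?_⟩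
    · conv_lhs => rw [← eA, hc]
      simp [← hW1]
    · conv_lhs => rw [← eP, hc']
      simp [← hW2]

/-- Engstrom's theorem: in a relation `A ∘ B = P ∘ Q` a common left factor `W` of degree
`gcd (deg A) (deg P)` can be split off. The approximate `g`-th roots of `A` and `P` provide the
two cofactors, up to a scalar. -/
theorem engstrom {A B P Q : ℂ[X]} (hA : 1 ≤ A.natDegree) (hP : 1 ≤ P.natDegree)
    (hB : 1 ≤ B.natDegree) (hQ : 1 ≤ Q.natDegree) (h : A.comp B = P.comp Q) :
    ∃ W A1 P1 : ℂ[X], A = W.comp A1 ∧ P = W.comp P1 ∧ A1.comp B = P1.comp Q ∧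
      Nat.Coprime A1.natDegree P1.natDegree := by
  have hA0 : A ≠ 0 := by rintro rfl; simp at hA
  have hP0 : P ≠ 0 := by rintro rfl; simp at hP
  obtain ⟨g, a, p, hg, hco, ha, hp⟩ := Nat.exists_coprime' (Nat.gcd_pos_of_pos_left P.natDegree hA)
  rw [mul_comm] at ha hp
  have ha1 : 1 ≤ a := Nat.pos_of_ne_zero (by rintro rfl; simp at ha; omega)
  have hp1 : 1 ≤ p := Nat.pos_of_ne_zero (by rintro rfl; simp at hp; omega)
  obtain ⟨A1, hAm, hAd, hAlt⟩ := exists_approx_root hg ha hA0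
  obtain ⟨P1, hPm, hPd, hPlt⟩ := exists_approx_root hg hp hP0
  set α := A.leadingCoeff with hα
  set π := P.leadingCoeff with hπ
  have hα0 : α ≠ 0 := leadingCoeff_ne_zero.2 hA0
  have hπ0 : π ≠ 0 := leadingCoeff_ne_zero.2 hP0
  obtain ⟨κ, hκ⟩ := IsAlgClosed.exists_pow_nat_eq (π / α) hg
  have hκ0 : κ ≠ 0 := by
    rintro rfl; rw [zero_pow (by omega)] at hκ
    exact div_ne_zero hπ0 hα0 hκ.symm
  have hl : a * B.natDegree = p * Q.natDegree := by
    have := congrArg natDegree h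
    rw [natDegree_comp, natDegree_comp, ha, hp, mul_assoc, mul_assoc] at this
    exact Nat.eq_of_mul_eq_mul_left hg this
  set ρ := A - C α * A1 ^ g with hρ
  set σ := P - C π * P1 ^ g with hσ
  have eA : A = C α * A1 ^ g + ρ := by rw [hρ]; ring
  have eP : P = C π * P1 ^ g + σ := by rw [hσ]; ring
  have hl1 : 1 ≤ a * B.natDegree := Nat.mul_pos ha1 hB
  obtain ⟨ω, hω, hωe⟩ := exists_root_smul (d := g) (U := A1.comp B) (V := C κ * P1.comp Q)
    (m := a * B.natDegree) hg (by rw [natDegree_comp, hAd])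
    (by rw [natDegree_C_mul hκ0, natDegree_comp, hPd, hl]) hl1 (by
      have e1 : C α * ((A1.comp B) ^ g - (C κ * P1.comp Q) ^ g) = σ.comp Q - ρ.comp B := by
        have h2 := h
        rw [eA, eP] at h2
        simp only [add_comp, mul_comp, C_comp, pow_comp] at h2
        have h3 : C α * (C κ * P1.comp Q) ^ g = C π * (P1.comp Q) ^ g := by
          rw [mul_pow, ← C_pow, hκ, ← mul_assoc, ← C_mul, mul_div_cancel₀ _ hα0]
        linear_combination h2 - h3
      rw [← degree_C_mul hα0, e1]
      refine lt_of_le_of_lt (degree_sub_le _ _) (max_lt ?_ ?_)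
      · rw [hl, ← mul_assoc]; exact degree_comp_lt hPlt rfl hQ
      · rw [← mul_assoc]; exact degree_comp_lt hAlt rfl hB)
  have hωκ : ω * κ ≠ 0 := mul_ne_zero hω hκ0
  have h1 : A1.comp B = (C (ω * κ) * P1).comp Q := by
    rw [hωe]; simp [mul_assoc]
  have hco' : Nat.Coprime A1.natDegree (C (ω * κ) * P1).natDegree := by
    rw [natDegree_C_mul hωκ, hAd, hPd]; exact hco
  obtain ⟨W, hW1, hW2⟩ := exists_common_left (by omega)
    (by rw [natDegree_C_mul hωκ]; omega) hB hQ hco' h1 _ A P le_rfl h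
  exact ⟨W, A1, _, hW1, hW2, h1, hco'⟩

/-! ### Norms and the distribution of fibers -/

open IntermediateField in
/-- The norm of `w` over `K` when `S(w) = k` lies in `K` and `[L : K(w)] = r`: by the degree count
the minimal polynomial of `w` is `S - k` divided by the leading coefficient of `S`. -/
theorem norm_formula {K L : Type*} [Field K] [Field L] [Algebra ℂ K] [Algebra K L] [Algebra ℂ L]
    [IsScalarTower ℂ K L] [FiniteDimensional K L] (w : L) (S : ℂ[X]) (hS : 1 ≤ S.natDegree) (k : K)
    (hw : aeval w S = algebraMap K L k) (r : ℕ) (hr : S.natDegree * r = Module.finrank K L)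
    (hr' : Module.finrank K⟮w⟯ L = r) :
    Algebra.norm K w = algebraMap ℂ K (((-1) ^ (S.natDegree + 1) / S.leadingCoeff) ^ r) *
      (k - algebraMap ℂ K (S.eval 0)) ^ r := by
  have hS0 : S ≠ 0 := by rintro rfl; simp at hS
  have hint : IsIntegral K w := Algebra.IsIntegral.isIntegral w
  set g : K[X] := S.map (algebraMap ℂ K) - C k with hg
  have hgd : g.natDegree = S.natDegree := by rw [hg, natDegree_sub_C, natDegree_map]
  have hgl : g.leadingCoeff = algebraMap ℂ K S.leadingCoeff := by
    rw [leadingCoeff, hgd, hg, coeff_sub, coeff_map, coeff_C, if_neg (by omega), sub_zero]; rfl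
  have hgw : aeval w g = 0 := by
    rw [hg, map_sub, aeval_map_algebraMap, hw, aeval_C, sub_self]
  have hrpos : 0 < r := by rw [← hr']; exact Module.finrank_pos
  have hmd : (minpoly K w).natDegree = S.natDegree := by
    have h1 := Module.finrank_mul_finrank K K⟮w⟯ L
    rw [adjoin.finrank hint, hr', ← hr] at h1
    exact Nat.eq_of_mul_eq_mul_right hrpos h1
  have hgm : g = C g.leadingCoeff * minpoly K w := by
    obtain ⟨q, hq⟩ := minpoly.dvd K w hgw
    have hg0 : g ≠ 0 := by rintro h; rw [h] at hgd; simp at hgd; omega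
    have hq0 : q ≠ 0 := by rintro rfl; rw [mul_zero] at hq; exact hg0 hq
    have := congrArg natDegree hq
    rw [natDegree_mul (minpoly.ne_zero hint) hq0, hgd, hmd] at this
    obtain ⟨c, rfl⟩ : ∃ c, q = C c := ⟨_, eq_C_of_natDegree_eq_zero (by omega)⟩
    rw [hq, leadingCoeff_mul, (minpoly.monic hint).leadingCoeff, leadingCoeff_C, one_mul, mul_comm]
  have hl0 : algebraMap ℂ K S.leadingCoeff ≠ 0 := by
    rw [Ne, map_eq_zero]; exact leadingCoeff_ne_zero.2 hS0
  have hc : (minpoly K w).coeff 0 = (algebraMap ℂ K (S.eval 0) - k) / algebraMap ℂ K S.leadingCoeff := by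
    have := congrArg (fun p => p.coeff 0) hgm
    simp only [coeff_C_mul, hgl] at this
    rw [hg, coeff_sub, coeff_map, coeff_C_zero, coeff_zero_eq_eval_zero] at this
    rw [this]; field_simp
  rw [Algebra.norm_eq_norm_adjoin, hr', map_pow, ← mul_pow]
  have h2 := Algebra.PowerBasis.norm_gen_eq_coeff_zero_minpoly (adjoin.powerBasis hint)
  rw [adjoin.powerBasis_gen, minpoly_gen, ← adjoin.powerBasis_gen hint] at h2
  rw [← adjoin.powerBasis_gen hint, h2, hc, ← PowerBasis.finrank, adjoin.finrank hint, hmd]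
  congr 1
  simp only [map_div₀, map_pow, map_neg, map_one]
  field_simp
  ring

/-- If `F` embeds into `E` compatibly with their embeddings into `L`, then `[L : E]` divides
`[L : F]`. -/
theorem dvd_aux {F E L : Type*} [Field F] [Field E] [Field L] [Algebra F L] [Algebra E L] (i : F →+* E)
    (h : ∀ x, algebraMap E L (i x) = algebraMap F L x) : Module.finrank E L ∣ Module.finrank F L := by
  let _ := i.toAlgebra
  have : IsScalarTower F E L := IsScalarTower.of_algebraMap_eq fun x => (h x).symm
  exact Module.finrank_dvd_finrank_left F E L

open IntermediateField in
/-- With `F` the base field, `[L : K(w)]` divides `[L : F(w)]`. -/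
theorem finrank_dvd_aux {F L : Type*} [Field F] [Field L] [Algebra F L] (K : IntermediateField F L)
    (w : L) : Module.finrank K⟮w⟯ L ∣ Module.finrank F⟮w⟯ L := by
  have hle : F⟮w⟯ ≤ (K⟮w⟯).restrictScalars F := by
    rw [adjoin_simple_le_iff, mem_restrictScalars]
    exact mem_adjoin_simple_self K w
  exact dvd_aux ((algebraMap F⟮w⟯ L).codRestrict K⟮w⟯ (fun x => hle x.2)) (fun x => rfl)

open IntermediateField in
/-- As a multiset, the image under `Q` of the fiber of `B` over `u` is `r` times the fiber of `P`
over `A(u)`. This is the norm of `B - u` from `ℂ(X)` down to `ℂ(Q)`, computed in two ways: from the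
linear factors `X - q` of `B - u`, each of which generates `ℂ(X)`, and from `A(B) = P(Q)`, which shows
that `B` has degree `deg A` over `ℂ(Q)` (here the coprimality of the degrees enters). -/
theorem fiber_prod {A B P Q : ℂ[X]} {r : ℕ} (hA : 1 ≤ A.natDegree) (hP : 1 ≤ P.natDegree)
    (hr : 1 ≤ r) (hco : Nat.Coprime A.natDegree P.natDegree)
    (hB : B.natDegree = P.natDegree * r) (hQ : Q.natDegree = A.natDegree * r)
    (h : A.comp B = P.comp Q) (u : ℂ) :
    ∃ κ : ℂ, κ ≠ 0 ∧ ((B - C u).roots.map (fun q => X - C (Q.eval q))).prod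
      = C κ * (P - C (A.eval u)) ^ r := by
  have hQ1 : 1 ≤ Q.natDegree := by rw [hQ]; exact Nat.mul_pos hA hr
  have hB1 : 1 ≤ B.natDegree := by rw [hB]; exact Nat.mul_pos hP hr
  set f : RatFunc ℂ := algebraMap ℂ[X] (RatFunc ℂ) Q with hf
  have hfr : Module.finrank ℂ⟮f⟯ (RatFunc ℂ) = Q.natDegree := by
    rw [RatFunc.finrank_eq_max_natDegree]; simp [hf]
  have : FiniteDimensional ℂ⟮f⟯ (RatFunc ℂ) := Module.finite_of_finrank_pos (by omega)
  set f' : ℂ⟮f⟯ := AdjoinSimple.gen ℂ f with hf'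
  have hff : algebraMap ℂ⟮f⟯ (RatFunc ℂ) f' = f := AdjoinSimple.algebraMap_gen ℂ f
  have hae : ∀ S T : ℂ[X], aeval (algebraMap ℂ[X] (RatFunc ℂ) S) T
      = algebraMap ℂ[X] (RatFunc ℂ) (T.comp S) := fun S T => by
    rw [aeval_algebraMap_apply, comp, aeval_def, algebraMap_eq]
  have haf : ∀ T : ℂ[X], algebraMap ℂ⟮f⟯ (RatFunc ℂ) (aeval f' T)
      = algebraMap ℂ[X] (RatFunc ℂ) (T.comp Q) := fun T => by
    rw [← aeval_algebraMap_apply, hff, hf, hae]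
  have hinj : Function.Injective (aeval f' : ℂ[X] →ₐ[ℂ] ℂ⟮f⟯) := by
    rw [injective_iff_map_eq_zero]
    intro T hT
    have h1 := haf T
    rw [hT, map_zero] at h1
    have h2 : T.comp Q = 0 := RatFunc.algebraMap_injective ℂ (by rw [← h1, map_zero])
    rcases comp_eq_zero_iff.1 h2 with h | h
    · exact h
    · rw [h.2] at hQ1; simp at hQ1
  -- norm of a linear polynomial
  have hlin : ∀ q : ℂ, Algebra.norm ℂ⟮f⟯ (algebraMap ℂ[X] (RatFunc ℂ) (X - C q))
      = aeval f' (C ((-1) ^ (Q.natDegree + 1) / Q.leadingCoeff) * (X - C (Q.eval q))) := by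
    intro q
    have hd : (Q.comp (X + C q)).natDegree = Q.natDegree := by
      rw [natDegree_comp, natDegree_X_add_C, mul_one]
    have hlc : (Q.comp (X + C q)).leadingCoeff = Q.leadingCoeff := by
      rw [leadingCoeff_comp (by rw [natDegree_X_add_C]; exact one_ne_zero)]; simp
    have := norm_formula (K := ℂ⟮f⟯) (algebraMap ℂ[X] (RatFunc ℂ) (X - C q)) (Q.comp (X + C q))
      (by rw [hd]; exact hQ1) f' (by rw [hae, comp_assoc, hff]; simp [hf]) 1
      (by rw [hd, mul_one, hfr]) (by
        have : ℂ⟮f⟯⟮algebraMap ℂ[X] (RatFunc ℂ) (X - C q)⟯ = ⊤ := by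
          rw [eq_top_iff, ← RatFunc.IntermediateField.adjoin_X ℂ⟮f⟯, adjoin_simple_le_iff]
          have e : (RatFunc.X : RatFunc ℂ) = algebraMap ℂ[X] (RatFunc ℂ) (X - C q)
              + algebraMap ℂ⟮f⟯ (RatFunc ℂ) (algebraMap ℂ ℂ⟮f⟯ q) := by
            rw [← IsScalarTower.algebraMap_apply ℂ ℂ⟮f⟯ (RatFunc ℂ), map_sub, RatFunc.algebraMap_X,
              RatFunc.algebraMap_C]
            simp [RatFunc.algebraMap_eq_C]
          rw [e]
          exact add_mem (mem_adjoin_simple_self _ _) (IntermediateField.algebraMap_mem _ _)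
        rw [this, IntermediateField.finrank_top])
    rw [this, hd, hlc]
    simp
  -- norm of `B - u`, whose minimal polynomial comes from `A(B) = P(Q)`
  have hBu : Algebra.norm ℂ⟮f⟯ (algebraMap ℂ[X] (RatFunc ℂ) (B - C u))
      = aeval f' (C (((-1) ^ (A.natDegree + 1) / A.leadingCoeff) ^ r) * (P - C (A.eval u)) ^ r) := by
    have hd : (A.comp (X + C u)).natDegree = A.natDegree := by
      rw [natDegree_comp, natDegree_X_add_C, mul_one]
    have hlc : (A.comp (X + C u)).leadingCoeff = A.leadingCoeff := by
      rw [leadingCoeff_comp (by rw [natDegree_X_add_C]; exact one_ne_zero)]; simp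
    have hw : aeval (algebraMap ℂ[X] (RatFunc ℂ) (B - C u)) (A.comp (X + C u))
        = algebraMap ℂ⟮f⟯ (RatFunc ℂ) (aeval f' P) := by
      rw [hae, haf, comp_assoc, ← h]; simp
    have := norm_formula (K := ℂ⟮f⟯) (algebraMap ℂ[X] (RatFunc ℂ) (B - C u)) (A.comp (X + C u))
      (by rw [hd]; exact hA) (aeval f' P) hw r
      (by rw [hd, hfr, hQ]) (by
        set w := algebraMap ℂ[X] (RatFunc ℂ) (B - C u) with hwdef
        have hint : IsIntegral ℂ⟮f⟯ w := Algebra.IsIntegral.isIntegral w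
        have h1 := Module.finrank_mul_finrank ℂ⟮f⟯ ℂ⟮f⟯⟮w⟯ (RatFunc ℂ)
        rw [hfr, hQ] at h1
        -- the degree of `w` is at most `deg A`, and its codegree `t` divides `r` by coprimality
        have h2 : Module.finrank ℂ⟮f⟯ ℂ⟮f⟯⟮w⟯ ≤ A.natDegree := by
          rw [adjoin.finrank hint]
          set g : ℂ⟮f⟯[X] := (A.comp (X + C u)).map (algebraMap ℂ ℂ⟮f⟯) - C (aeval f' P) with hg
          have hgd : g.natDegree = A.natDegree := by rw [hg, natDegree_sub_C, natDegree_map, hd]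
          rw [← hgd]
          apply natDegree_le_of_dvd
          · apply minpoly.dvd
            rw [hg, map_sub, aeval_map_algebraMap, hw, aeval_C, sub_self]
          · rintro h; rw [h] at hgd; simp at hgd; omega
        have h3 : Module.finrank ℂ⟮f⟯⟮w⟯ (RatFunc ℂ) ∣ P.natDegree * r := by
          have e1 : Module.finrank ℂ⟮w⟯ (RatFunc ℂ) = P.natDegree * r := by
            rw [RatFunc.finrank_eq_max_natDegree, hwdef, RatFunc.num_algebraMap, RatFunc.denom_algebraMap, natDegree_sub_C, hB]; simp
          rw [← e1]
          exact finrank_dvd_aux _ _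
        set t := Module.finrank ℂ⟮f⟯⟮w⟯ (RatFunc ℂ)
        have h4 : t ∣ r := by
          have : t ∣ Nat.gcd (A.natDegree * r) (P.natDegree * r) :=
            Nat.dvd_gcd (Dvd.intro_left _ h1) h3
          rwa [Nat.gcd_mul_right, hco, one_mul] at this
        have h5 : r ≤ t := by
          have : A.natDegree * r ≤ A.natDegree * t := by
            rw [← h1]; exact Nat.mul_le_mul_right _ h2
          exact Nat.le_of_mul_le_mul_left this hA
        exact le_antisymm (Nat.le_of_dvd hr h4) h5)
    rw [this, hd, hlc]
    simp
  have hB0 : B - C u ≠ 0 := by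
    intro h0; have := natDegree_sub_C (p := B) (a := u); rw [h0] at this; simp at this; omega
  have hsp : B - C u = C (B - C u).leadingCoeff * ((B - C u).roots.map (fun q => X - C q)).prod :=
    (IsAlgClosed.splits (B - C u)).eq_prod_roots
  set l := (B - C u).leadingCoeff with hl
  have hl0 : l ≠ 0 := leadingCoeff_ne_zero.2 hB0
  have hcn : Algebra.norm ℂ⟮f⟯ (algebraMap ℂ[X] (RatFunc ℂ) (C l)) = aeval f' (C (l ^ Q.natDegree)) := by
    have : algebraMap ℂ[X] (RatFunc ℂ) (C l)
        = algebraMap ℂ⟮f⟯ (RatFunc ℂ) (algebraMap ℂ ℂ⟮f⟯ l) := by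
      rw [← IsScalarTower.algebraMap_apply ℂ ℂ⟮f⟯ (RatFunc ℂ), RatFunc.algebraMap_C]
      simp [RatFunc.algebraMap_eq_C]
    rw [this, Algebra.norm_algebraMap, hfr, aeval_C, map_pow]
  set c1 := (-1) ^ (Q.natDegree + 1) / Q.leadingCoeff with hc1
  set c2 := (((-1) ^ (A.natDegree + 1) / A.leadingCoeff) ^ r) with hc2
  have hprod : ∀ m : Multiset ℂ, Algebra.norm ℂ⟮f⟯ (algebraMap ℂ[X] (RatFunc ℂ)
      (m.map (fun q => X - C q)).prod)
      = aeval f' (C (c1 ^ m.card) * (m.map (fun q => X - C (Q.eval q))).prod) := by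
    intro m
    induction m using Multiset.induction_on with
    | empty => simp
    | cons q m ih =>
      rw [Multiset.map_cons, Multiset.prod_cons, map_mul, map_mul, ih, hlin, ← map_mul]
      congr 1
      rw [Multiset.map_cons, Multiset.prod_cons, Multiset.card_cons, pow_succ, C_mul]
      ring
  have hfin := hBu
  rw [hsp, map_mul, map_mul, hcn, hprod, ← map_mul] at hfin
  have hfin := hinj hfin
  set N := (B - C u).roots.card
  have hQ0 : Q.leadingCoeff ≠ 0 := leadingCoeff_ne_zero.2 (by rintro rfl; simp at hQ1)
  have hA0 : A.leadingCoeff ≠ 0 := leadingCoeff_ne_zero.2 (by rintro rfl; simp at hA)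
  have h1 : c1 ≠ 0 := div_ne_zero (pow_ne_zero _ (by norm_num)) hQ0
  have h2 : c2 ≠ 0 := pow_ne_zero _ (div_ne_zero (pow_ne_zero _ (by norm_num)) hA0)
  have h3 : l ^ Q.natDegree * c1 ^ N ≠ 0 := mul_ne_zero (pow_ne_zero _ hl0) (pow_ne_zero _ h1)
  refine ⟨c2 / (l ^ Q.natDegree * c1 ^ N), div_ne_zero h2 h3, ?_⟩
  have h4 : C (l ^ Q.natDegree * c1 ^ N) ≠ (0 : ℂ[X]) := C_ne_zero.2 h3
  apply mul_left_cancel₀ h4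
  rw [← mul_assoc, ← C_mul, mul_div_cancel₀ _ h3, ← hfin, C_mul, mul_assoc]

/-! ### Ramification and bad points -/

/-- The ramification index of `F` at `v`: the order of vanishing of `F - F(v)` at `v`. It is `0`
when `F` is constant. -/
noncomputable def ramIdx (F : ℂ[X]) (v : ℂ) : ℕ := (F - C (F.eval v)).rootMultiplicity v

theorem sub_C_ne_zero {F : ℂ[X]} (hF : 1 ≤ F.natDegree) (c : ℂ) : F - C c ≠ 0 := by
  intro h
  have := natDegree_sub_C (p := F) (a := c)
  rw [h] at this; simp at this; omega

theorem ramIdx_pos {F : ℂ[X]} (hF : 1 ≤ F.natDegree) (v : ℂ) : 1 ≤ ramIdx F v := by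
  rw [ramIdx, Nat.one_le_iff_ne_zero, ← Nat.pos_iff_ne_zero, rootMultiplicity_pos (sub_C_ne_zero hF _)]
  simp

theorem ramIdx_comp {F Q : ℂ[X]} (hF : 1 ≤ F.natDegree) (hQ : 1 ≤ Q.natDegree) (p : ℂ) :
    ramIdx (F.comp Q) p = ramIdx F (Q.eval p) * ramIdx Q p := by
  have hF0 := sub_C_ne_zero hF (F.eval (Q.eval p))
  obtain ⟨g, hg, hg'⟩ := exists_eq_pow_rootMultiplicity_mul_and_not_dvd _ hF0 (Q.eval p)
  rw [dvd_iff_isRoot] at hg'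
  have hFQ : F.comp Q - C ((F.comp Q).eval p) = (Q - C (Q.eval p)) ^ (ramIdx F (Q.eval p)) * g.comp Q := by
    have := congrArg (fun S => S.comp Q) hg
    simp only [sub_comp, C_comp, mul_comp, pow_comp, X_comp] at this
    rw [eval_comp, this]; rfl
  have hne : F.comp Q - C ((F.comp Q).eval p) ≠ 0 :=
    sub_C_ne_zero (by rw [natDegree_comp]; exact Nat.mul_pos hF hQ) _
  have hne' := hne
  rw [hFQ] at hne'
  have hz : (g.comp Q).rootMultiplicity p = 0 := by
    apply rootMultiplicity_eq_zero
    rwa [IsRoot, eval_comp]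
  conv_lhs => rw [ramIdx, hFQ]
  rw [rootMultiplicity_mul hne', hz, add_zero, ← count_roots, roots_pow, Multiset.count_nsmul, count_roots]
  rfl

/-- Above each pair `(u, v)` with `A(u) = P(v)`, the points of `Q⁻¹(v) ∩ B⁻¹(u)`, counted with
their multiplicity in `Q`, number `r` times the ramification index of `A` at `u`. -/
theorem fiber_count {A B P Q : ℂ[X]} {r : ℕ} (hA : 1 ≤ A.natDegree) (hP : 1 ≤ P.natDegree)
    (hr : 1 ≤ r) (hco : Nat.Coprime A.natDegree P.natDegree)
    (hB : B.natDegree = P.natDegree * r) (hQ : Q.natDegree = A.natDegree * r)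
    (h : A.comp B = P.comp Q) (u v : ℂ) (huv : A.eval u = P.eval v) :
    (((Q - C v).roots.map (fun q => B.eval q)).count u) = r * ramIdx A u := by
  obtain ⟨κ, hκ, hk⟩ := fiber_prod hP hA hr hco.symm hQ hB h.symm v
  have := congrArg (fun S => S.roots.count u) hk
  simp only [roots_C_mul _ hκ, roots_pow, Multiset.count_nsmul, count_roots] at this
  rw [← huv] at this
  rw [ramIdx, ← this]
  have := roots_multiset_prod_X_sub_C ((Q - C v).roots.map (fun q => B.eval q))
  rw [Multiset.map_map] at this
  rw [← count_roots]
  conv_lhs => rw [← this]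
  rfl

theorem ramIdx_le_derivative (F : ℂ[X]) (v : ℂ) :
    ramIdx F v ≤ F.derivative.roots.count v + 1 := by
  have h1 : F.derivative = (F - C (F.eval v)).derivative := by simp
  rw [count_roots, h1, ramIdx]
  have hr : (F - C (F.eval v)).IsRoot v := by simp
  rw [derivative_rootMultiplicity_of_root hr]
  omega

theorem derivative_ne {F : ℂ[X]} (hF : 1 ≤ F.natDegree) : F.derivative ≠ 0 := by
  intro h
  have := derivative_eq_zero.1 h
  omega

theorem sum_count_le {α : Type*} [DecidableEq α] (s : Finset α) (m : Multiset α) :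
    ∑ a ∈ s, m.count a ≤ m.card := by
  rw [← Multiset.toFinset_sum_count_eq m]
  refine Finset.sum_le_sum_of_ne_zero fun a _ h => ?_
  rw [Multiset.mem_toFinset, ← Multiset.count_ne_zero]
  exact h

open Classical in
/-- Distinct fibers of `F` are disjoint. -/
theorem sum_filter_fiber_le (m : Multiset ℂ) (F : ℂ[X]) (T : Finset ℂ) :
    ∑ c ∈ T, (m.filter (fun v => F.eval v = c)).card ≤ m.card := by
  induction m using Multiset.induction_on with
  | empty => simp
  | cons a m ih =>
    simp only [Multiset.filter_cons, Multiset.card_add, Finset.sum_add_distrib, Multiset.card_cons]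
    have : ∑ c ∈ T, (if F.eval a = c then ({a} : Multiset ℂ) else 0).card ≤ 1 := by
      have : ∀ c, (if F.eval a = c then ({a} : Multiset ℂ) else 0).card = if F.eval a = c then 1 else 0 := by
        intro c; split_ifs <;> simp
      simp only [this, Finset.sum_ite_eq]
      split_ifs <;> simp
    omega

open Classical in
theorem fiber_card {P : ℂ[X]} (hP : 1 ≤ P.natDegree) (c : ℂ) :
    P.natDegree = ∑ v ∈ (P - C c).roots.toFinset, ramIdx P v := by
  have h1 : (P - C c).roots.card = P.natDegree := by
    rw [← (IsAlgClosed.splits (P - C c)).natDegree_eq_card_roots, natDegree_sub_C]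
  rw [← h1, ← Multiset.toFinset_sum_count_eq]
  refine Finset.sum_congr rfl fun v hv => ?_
  rw [Multiset.mem_toFinset, mem_roots (sub_C_ne_zero hP c), IsRoot, eval_sub, eval_C, sub_eq_zero] at hv
  rw [count_roots, ramIdx, hv]

open Classical in
/-- A fiber of `P` loses at most as many points as it contains critical points. -/
theorem rh_fiber {P : ℂ[X]} (hP : 1 ≤ P.natDegree) (c : ℂ) :
    P.natDegree ≤ (P - C c).roots.toFinset.card
      + (P.derivative.roots.filter (fun v => P.eval v = c)).card := by
  rw [fiber_card hP c]
  have : ∑ v ∈ (P - C c).roots.toFinset, ramIdx P v ≤ ∑ v ∈ (P - C c).roots.toFinset,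
      (1 + (P.derivative.roots.filter (fun v => P.eval v = c)).count v) := by
    refine Finset.sum_le_sum fun v hv => ?_
    rw [Multiset.mem_toFinset, mem_roots (sub_C_ne_zero hP c), IsRoot, eval_sub, eval_C, sub_eq_zero] at hv
    rw [Multiset.count_filter, if_pos hv, add_comm]
    exact ramIdx_le_derivative P v
  refine this.trans ?_
  rw [Finset.sum_add_distrib]
  simp only [Finset.sum_const, smul_eq_mul, mul_one]
  exact Nat.add_le_add_left (sum_count_le _ _) _

open Classical in
/-- The Riemann-Hurwitz inequality for `P`, restricted to the fibers over `T`. -/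
theorem rh_sum {P : ℂ[X]} (hP : 1 ≤ P.natDegree) (T : Finset ℂ) :
    T.card * P.natDegree + 1 ≤ ∑ c ∈ T, (P - C c).roots.toFinset.card + P.natDegree := by
  have h1 : ∑ c ∈ T, P.natDegree ≤ ∑ c ∈ T, ((P - C c).roots.toFinset.card
      + (P.derivative.roots.filter (fun v => P.eval v = c)).card) :=
    Finset.sum_le_sum fun c _ => rh_fiber hP c
  rw [Finset.sum_add_distrib, Finset.sum_const, smul_eq_mul] at h1
  have h2 := sum_filter_fiber_le P.derivative.roots P T
  have h3 := card_roots' P.derivative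
  have h4 := natDegree_derivative_lt (p := P) (by omega)
  omega

/-- The points `v` at which the ramification of `P` does not absorb that of `A`: some `u` with
`A(u) = P(v)` has a ramification index not dividing that of `P` at `v`. -/
def BadPt (A P : ℂ[X]) (v : ℂ) : Prop := ∃ u, A.eval u = P.eval v ∧ ¬ ramIdx A u ∣ ramIdx P v

open Classical in
/-- A bad point is a critical value of `Q` of weight at least `r / 2`: by multiplicativity of
ramification indices, `Q` ramifies at every point of `Q⁻¹(v) ∩ B⁻¹(u)`. -/
theorem bad_weight {A B P Q : ℂ[X]} {r : ℕ} (hA : 1 ≤ A.natDegree) (hP : 1 ≤ P.natDegree)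
    (hr : 1 ≤ r) (hco : Nat.Coprime A.natDegree P.natDegree)
    (hB : B.natDegree = P.natDegree * r) (hQ : Q.natDegree = A.natDegree * r)
    (h : A.comp B = P.comp Q) (v : ℂ) (hv : BadPt A P v) :
    r ≤ 2 * (Q.derivative.roots.filter (fun p => Q.eval p = v)).card := by
  obtain ⟨u, huv, hu⟩ := hv
  have hQ1 : 1 ≤ Q.natDegree := by rw [hQ]; exact Nat.mul_pos hA hr
  have hB1 : 1 ≤ B.natDegree := by rw [hB]; exact Nat.mul_pos hP hr
  have h1 := fiber_count hA hP hr hco hB hQ h u v huv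
  have h2 : r ≤ r * ramIdx A u := Nat.le_mul_of_pos_right _ (ramIdx_pos hA u)
  rw [← h1, Multiset.count_map] at h2
  refine h2.trans ?_
  rw [← Multiset.toFinset_sum_count_eq]
  refine le_trans (Finset.sum_le_sum (g := fun p => 2 * (Q.derivative.roots.filter (fun p => Q.eval p = v)).count p) ?_) ?_
  · intro p hp
    rw [Multiset.mem_toFinset, Multiset.mem_filter, mem_roots (sub_C_ne_zero hQ1 v), IsRoot, eval_sub,
      eval_C, sub_eq_zero] at hp
    obtain ⟨hp1, hp2⟩ := hp
    rw [Multiset.count_filter, if_pos hp2, Multiset.count_filter, if_pos hp1, count_roots]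
    have e1 : rootMultiplicity p (Q - C v) = ramIdx Q p := by rw [ramIdx, hp1]
    rw [e1]
    have e2 := ramIdx_le_derivative Q p
    have e3 : ramIdx Q p ≠ 1 := by
      intro e
      apply hu
      have := ramIdx_comp hA hB1 p
      rw [h, ramIdx_comp hP hQ1, e, hp1, ← hp2, mul_one] at this
      exact Dvd.intro _ this.symm
    have e4 := ramIdx_pos hQ1 p
    omega
  · rw [← Finset.mul_sum]
    exact Nat.mul_le_mul_left _ (sum_count_le _ _)

open Classical in
/-- Since `Q` has fewer than `deg Q = r * deg A` critical points, the bad points number fewer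
than `2 * deg A`, a bound that does not depend on `P`. -/
theorem bad_card {A B P Q : ℂ[X]} {r : ℕ} (hA : 1 ≤ A.natDegree) (hP : 1 ≤ P.natDegree)
    (hr : 1 ≤ r) (hco : Nat.Coprime A.natDegree P.natDegree)
    (hB : B.natDegree = P.natDegree * r) (hQ : Q.natDegree = A.natDegree * r)
    (h : A.comp B = P.comp Q) (S : Finset ℂ) (hS : ∀ v ∈ S, BadPt A P v) :
    S.card < 2 * A.natDegree := by
  have hQ1 : 1 ≤ Q.natDegree := by rw [hQ]; exact Nat.mul_pos hA hr
  have h1 : ∑ v ∈ S, r ≤ ∑ v ∈ S, 2 * (Q.derivative.roots.filter (fun p => Q.eval p = v)).card :=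
    Finset.sum_le_sum fun v hv => bad_weight hA hP hr hco hB hQ h v (hS v hv)
  rw [← Finset.mul_sum, Finset.sum_const, smul_eq_mul] at h1
  have h2 := sum_filter_fiber_le Q.derivative.roots Q S
  have h3 := card_roots' Q.derivative
  have h4 := natDegree_derivative_lt (p := Q) (by omega)
  have h5 : S.card * r < (2 * A.natDegree) * r := by rw [mul_assoc, ← hQ]; omega
  exact Nat.lt_of_mul_lt_mul_right h5

open Classical in
/-- At the points of the fiber over `A(u)` that are not bad, `P` ramifies to order at least
`ramIdx A u`, so there are at most `deg P / m` of them. -/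
theorem fiber_bound {A P : ℂ[X]} (hP : 1 ≤ P.natDegree) (u : ℂ) (m : ℕ)
    (hm : m ≤ ramIdx A u) :
    m * (P - C (A.eval u)).roots.toFinset.card ≤
      m * ((P - C (A.eval u)).roots.toFinset.filter (BadPt A P)).card + P.natDegree := by
  rw [← Finset.card_filter_add_card_filter_not (s := (P - C (A.eval u)).roots.toFinset) (BadPt A P), mul_add]
  refine Nat.add_le_add_left ?_ _
  rw [fiber_card hP (A.eval u), mul_comm, ← smul_eq_mul, ← Finset.sum_const]
  refine le_trans (Finset.sum_le_sum (g := fun v => ramIdx P v) ?_)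
    (Finset.sum_le_sum_of_subset (Finset.filter_subset _ _))
  intro v hv
  rw [Finset.mem_filter, Multiset.mem_toFinset, mem_roots (sub_C_ne_zero hP _), IsRoot, eval_sub,
      eval_C, sub_eq_zero] at hv
  have : ramIdx A u ∣ ramIdx P v := by
    by_contra hc; exact hv.2 ⟨u, hv.1.symm, hc⟩
  exact hm.trans (Nat.le_of_dvd (ramIdx_pos hP v) this)

open Classical in
theorem bad_sum {A B P Q : ℂ[X]} {r : ℕ} (hA : 1 ≤ A.natDegree) (hP : 1 ≤ P.natDegree)
    (hr : 1 ≤ r) (hco : Nat.Coprime A.natDegree P.natDegree)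
    (hB : B.natDegree = P.natDegree * r) (hQ : Q.natDegree = A.natDegree * r)
    (h : A.comp B = P.comp Q) (T : Finset ℂ) :
    ∑ c ∈ T, ((P - C c).roots.toFinset.filter (BadPt A P)).card < 2 * A.natDegree := by
  rw [← Finset.card_biUnion]
  · apply bad_card hA hP hr hco hB hQ h
    intro v hv
    rw [Finset.mem_biUnion] at hv
    obtain ⟨c, _, hv⟩ := hv
    exact (Finset.mem_filter.1 hv).2
  · intro c _ d _ hcd
    rw [Function.onFun, Finset.disjoint_left]
    intro v hv hv'
    rw [Finset.mem_filter, Multiset.mem_toFinset, mem_roots (sub_C_ne_zero hP _), IsRoot, eval_sub,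
      eval_C, sub_eq_zero] at hv hv'
    exact hcd (hv.1.symm.trans hv'.1)

/-! ### The Chebyshev equation -/

/-- The action of the Chebyshev differential operator on coefficients close to the leading one. -/
theorem ode_coeff (D : ℂ[X]) (d : ℕ) (hd : D.natDegree < d + 2) :
    (X * derivative D + (X ^ 2 - 1) * derivative (derivative D)).coeff d = (d : ℂ) ^ 2 * D.coeff d := by
  have h1 : (X * derivative D).coeff d = d * D.coeff d := by
    cases d with
    | zero => simp
    | succ d => rw [coeff_X_mul, coeff_derivative]; push_cast; ring
  have h2 : (X ^ 2 * derivative (derivative D)).coeff d = d * (d - 1) * D.coeff d := by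
    match d with
    | 0 => simp
    | 1 => simp [coeff_X_pow_mul']
    | d + 2 => rw [coeff_X_pow_mul, coeff_derivative, coeff_derivative]; push_cast; ring
  have h3 : (derivative (derivative D)).coeff d = 0 := by
    rw [coeff_derivative, coeff_derivative, coeff_eq_zero_of_natDegree_lt (by omega)]; ring
  rw [coeff_add, sub_mul, one_mul, coeff_sub, h1, h2, h3]; ring

theorem T_ode (a : ℕ) : C ((a : ℂ) ^ 2) * Chebyshev.T ℂ (a : ℤ) =
    X * derivative (Chebyshev.T ℂ (a : ℤ))
      + (X ^ 2 - 1) * derivative (derivative (Chebyshev.T ℂ (a : ℤ))) := by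
  have := Chebyshev.one_sub_X_sq_mul_derivative_derivative_T_eq_poly_in_T (R := ℂ) (a : ℤ)
  simp only [Function.iterate_succ, Function.iterate_zero, Function.comp, id] at this
  rw [C_pow, C_eq_natCast]
  push_cast at this
  linear_combination this

/-- The polynomial solutions of degree `a` of the Chebyshev equation are multiples of `T_a`: the
operator is triangular with distinct eigenvalues `d ^ 2`. -/
theorem ode_unique {F : ℂ[X]} {a : ℕ} (ha : 1 ≤ a) (hF : F.natDegree = a)
    (hode : C ((a : ℂ) ^ 2) * F = X * derivative F + (X ^ 2 - 1) * derivative (derivative F)) :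
    ∃ l : ℂ, l ≠ 0 ∧ F = C l * Chebyshev.T ℂ (a : ℤ) := by
  set T := Chebyshev.T ℂ (a : ℤ) with hT
  have hTd : T.natDegree = a := by rw [hT, Chebyshev.natDegree_T]; simp
  have hT0 : T ≠ 0 := by intro h; rw [h] at hTd; simp at hTd; omega
  have hF0 : F ≠ 0 := by intro h; rw [h] at hF; simp at hF; omega
  have hTode : C ((a : ℂ) ^ 2) * T = X * derivative T + (X ^ 2 - 1) * derivative (derivative T) :=
    T_ode a
  set l := F.leadingCoeff / T.leadingCoeff with hl
  have hTl : T.leadingCoeff ≠ 0 := leadingCoeff_ne_zero.2 hT0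
  have hl0 : l ≠ 0 := div_ne_zero (leadingCoeff_ne_zero.2 hF0) hTl
  refine ⟨l, hl0, ?_⟩
  set D := F - C l * T with hD
  have hDode : C ((a : ℂ) ^ 2) * D = X * derivative D + (X ^ 2 - 1) * derivative (derivative D) := by
    rw [hD]
    simp only [derivative_sub, derivative_C_mul]
    linear_combination hode - C l * hTode
  by_contra hne
  have hD0 : D ≠ 0 := fun h => hne (sub_eq_zero.1 h)
  have hDl : D.degree < F.degree := by
    apply degree_sub_lt_left _ hF0
    · rw [leadingCoeff_mul, leadingCoeff_C, hl, div_mul_cancel₀ _ hTl]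
    · rw [degree_C_mul hl0, degree_eq_natDegree hF0, degree_eq_natDegree hT0, hF, hTd]
  have hDd : D.natDegree < a := by rw [← hF]; exact natDegree_lt_natDegree hD0 hDl
  have h1 := ode_coeff D D.natDegree (by omega)
  rw [← hDode, coeff_C_mul] at h1
  have h2 : ((a : ℂ) ^ 2) = (D.natDegree : ℂ) ^ 2 :=
    mul_right_cancel₀ (leadingCoeff_ne_zero.2 hD0) h1
  have h3 : a ^ 2 = D.natDegree ^ 2 := by exact_mod_cast h2
  have h4 := Nat.pow_left_injective (n := 2) (by norm_num) h3
  omega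

/-- The solutions of the Pell-type equation `F ^ 2 - 1 = k * (X ^ 2 - 1) * (dF/dX) ^ 2` are multiples of Chebyshev
polynomials: differentiation turns it into the Chebyshev equation. -/
theorem cheb_of_pell {F : ℂ[X]} {k : ℂ} (hF : 1 ≤ F.natDegree)
    (h : F ^ 2 - 1 = C k * (X ^ 2 - 1) * derivative F ^ 2) :
    ∃ l : ℂ, l ≠ 0 ∧ F = C l * Chebyshev.T ℂ (F.natDegree : ℤ) := by
  have hF' := derivative_ne hF
  have hode : F = C k * (X * derivative F + (X ^ 2 - 1) * derivative (derivative F)) := by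
    have h1 := congrArg derivative h
    simp only [derivative_sub, derivative_mul, derivative_pow, derivative_one, derivative_C, derivative_X] at h1
    have : C 2 * derivative F * F = C 2 * derivative F *
        (C k * (X * derivative F + (X ^ 2 - 1) * derivative (derivative F))) := by
      norm_num at h1
      linear_combination h1
    exact mul_left_cancel₀ (mul_ne_zero (C_ne_zero.2 two_ne_zero) hF') this
  have hk : k * (F.natDegree : ℂ) ^ 2 = 1 := by
    have h1 := congrArg (fun S => S.coeff F.natDegree) hode
    simp only [coeff_C_mul] at h1
    rw [ode_coeff F F.natDegree (by omega)] at h1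
    have hl : F.coeff F.natDegree ≠ 0 := leadingCoeff_ne_zero.2 (by rintro rfl; simp at hF)
    apply mul_right_cancel₀ hl
    rw [one_mul, mul_assoc, ← h1]
  apply ode_unique hF rfl
  have hk' : C k * C ((F.natDegree : ℂ) ^ 2) = (1 : ℂ[X]) := by rw [← C_mul, hk, C_1]
  linear_combination C ((F.natDegree : ℂ) ^ 2) * hode
    + (X * derivative F + (X ^ 2 - 1) * derivative (derivative F)) * hk'

theorem cheb_of_quadratic {F q : ℂ[X]} (hF : 1 ≤ F.natDegree) (hq : q.natDegree = 2)
    (h : F ^ 2 - 1 = q * derivative F ^ 2) :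
    ∃ l g d : ℂ, l ≠ 0 ∧ g ≠ 0 ∧ F.comp (C g * X + C d) = C l * Chebyshev.T ℂ (F.natDegree : ℤ) := by
  have hq0 : q ≠ 0 := by rintro rfl; simp at hq
  have hqs := (IsAlgClosed.splits q).eq_prod_roots
  have hqc : q.roots.card = 2 := by rw [← (IsAlgClosed.splits q).natDegree_eq_card_roots, hq]
  obtain ⟨s, t, hst⟩ := Multiset.card_eq_two.1 hqc
  set k := q.leadingCoeff
  have hk0 : k ≠ 0 := leadingCoeff_ne_zero.2 hq0
  have hqf : q = C k * ((X - C s) * (X - C t)) := by rw [hqs, hst]; simp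
  by_cases hne : s = t
  -- for a double root, `F² - S² = 1` makes `F - S` and `F + S` units, hence `F` constant
  · exfalso
    subst hne
    obtain ⟨σ, hσ⟩ := IsAlgClosed.exists_pow_nat_eq k (n := 2) (by norm_num)
    set S := C σ * (X - C s) * derivative F with hS
    have hu : (F - S) * (F + S) = 1 := by
      have : C k = C σ ^ 2 := by rw [← C_pow, hσ]
      rw [hqf, this] at h
      rw [hS]; linear_combination h
    have h1 := natDegree_eq_zero_of_isUnit (IsUnit.of_mul_eq_one _ hu)
    have h2 := natDegree_eq_zero_of_isUnit (IsUnit.of_mul_eq_one _ ((mul_comm _ _).trans hu))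
    have h3 : C 2 * F = (F - S) + (F + S) := by simp only [map_ofNat]; ring
    have h4 : (C 2 * F).natDegree ≤ 0 := by
      rw [h3]; exact (natDegree_add_le _ _).trans (by omega)
    rw [natDegree_C_mul two_ne_zero] at h4
    omega
  · set g := (t - s) / 2 with hg
    set d := (s + t) / 2 with hd
    have hg0 : g ≠ 0 := div_ne_zero (sub_ne_zero.2 (Ne.symm hne)) two_ne_zero
    have hdeg : (F.comp (C g * X + C d)).natDegree = F.natDegree := by
      rw [natDegree_comp, natDegree_linear hg0, mul_one]
    have hp := cheb_of_pell (F := F.comp (C g * X + C d)) (k := k) (by rw [hdeg]; exact hF) (by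
      have h1 := congrArg (fun S => S.comp (C g * X + C d)) h
      rw [hqf] at h1
      simp only [sub_comp, mul_comp, pow_comp, X_comp, C_comp, one_comp] at h1
      rw [h1, derivative_comp]
      simp only [derivative_add, derivative_mul, derivative_C, derivative_X]
      have e1 : C g * X + C d - C s = C g * (X + 1) := by
        have : C d - C s = C g := by rw [← C_sub, hd, hg]; congr 1; ring
        linear_combination this
      have e2 : C g * X + C d - C t = C g * (X - 1) := by
        have : C t - C d = C g := by rw [← C_sub, hd, hg]; congr 1; ring
        linear_combination - this
      rw [e1, e2]; ring)
    rw [hdeg] at hp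
    obtain ⟨l, hl, hl'⟩ := hp
    exact ⟨l, g, d, hl, hg0, hl'⟩

/-! ### Decompositions with coprime degrees -/

theorem ramIdx_eq {F : ℂ[X]} (hF : 1 ≤ F.natDegree) (v : ℂ) :
    ramIdx F v = F.derivative.roots.count v + 1 := by
  have h1 : F.derivative = (F - C (F.eval v)).derivative := by simp
  have hp := ramIdx_pos hF v
  rw [ramIdx] at hp
  rw [count_roots, h1, ramIdx]
  have hr : (F - C (F.eval v)).IsRoot v := by simp
  rw [derivative_rootMultiplicity_of_root hr]
  omega

theorem two_le_ramIdx {F : ℂ[X]} (hF : 1 ≤ F.natDegree) {v : ℂ} (hv : v ∈ F.derivative.roots) :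
    2 ≤ ramIdx F v := by
  rw [ramIdx_eq hF]
  have := Multiset.one_le_count_iff_mem.2 hv
  omega

theorem card_derivative_roots {F : ℂ[X]} : F.derivative.roots.card = F.natDegree - 1 := by
  rw [← (IsAlgClosed.splits _).natDegree_eq_card_roots]
  exact natDegree_derivative F

/-- `A` is, up to affine changes of variable on both sides, the polynomial `E`. -/
def AffEquiv (A E : ℂ[X]) : Prop :=
  ∃ l c g d : ℂ, l ≠ 0 ∧ g ≠ 0 ∧ A.comp (C g * X + C d) = C l * E + C c

open Classical in
/-- With a single critical value, the fiber over it is one point. -/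
theorem pow_of_one_crit {A : ℂ[X]} (hA : 2 ≤ A.natDegree)
    (hone : ∀ p ∈ A.derivative.roots, ∀ q ∈ A.derivative.roots, A.eval p = A.eval q) :
    AffEquiv A (X ^ A.natDegree) := by
  have hc := card_derivative_roots (F := A)
  obtain ⟨u, hu⟩ := Multiset.card_pos_iff_exists_mem.1 (show 0 < A.derivative.roots.card by omega)
  set c := A.eval u with hcdef
  have h1 := fiber_card (P := A) (by omega) c
  simp only [ramIdx_eq (show 1 ≤ A.natDegree by omega)] at h1
  have hmem : ∀ v, v ∈ (A - C c).roots ↔ A.eval v = c := fun v => by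
    rw [mem_roots (sub_C_ne_zero (by omega) c), IsRoot, eval_sub, eval_C, sub_eq_zero]
  rw [Finset.sum_add_distrib, Multiset.sum_count_eq_card (fun v hv => by
    rw [Multiset.mem_toFinset, hmem]; exact hone v hv u hu), hc] at h1
  simp only [Finset.sum_const, smul_eq_mul, mul_one] at h1
  have h2 : (A - C c).roots.toFinset.card ≤ 1 := by omega
  have h3 : (A - C c).roots = Multiset.replicate A.natDegree u := by
    rw [Multiset.eq_replicate]
    constructor
    · rw [← (IsAlgClosed.splits _).natDegree_eq_card_roots, natDegree_sub_C]
    · intro v hv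
      exact Finset.card_le_one.1 h2 v (Multiset.mem_toFinset.2 hv) u
        (Multiset.mem_toFinset.2 ((hmem u).2 rfl))
  have h4 := (IsAlgClosed.splits (A - C c)).eq_prod_roots
  rw [h3] at h4
  simp only [Multiset.map_replicate, Multiset.prod_replicate] at h4
  refine ⟨(A - C c).leadingCoeff, c, 1, u, leadingCoeff_ne_zero.2 (sub_C_ne_zero (by omega) c),
    one_ne_zero, ?_⟩
  have h5 : A = C (A - C c).leadingCoeff * (X - C u) ^ A.natDegree + C c := by
    rw [← h4, sub_add_cancel]
  have h6 := congrArg (fun S => S.comp (C 1 * X + C u)) h5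
  rw [h6]; simp

open Classical in
/-- With two critical values and simple critical points, `(A - c₁)(A - c₂)` is a quadratic
polynomial times the square of the derivative of `A`; rescaling `A` gives the Pell-type equation. -/
theorem cheb_of_two_crit {A : ℂ[X]} (hA : 2 ≤ A.natDegree) (c₁ c₂ : ℂ) (hne : c₁ ≠ c₂)
    (h : ∀ p ∈ A.derivative.roots, A.eval p = c₁ ∨ A.eval p = c₂) (h2 : ∀ p, ramIdx A p ≤ 2) :
    AffEquiv A (Chebyshev.T ℂ (A.natDegree : ℤ)) := by
  have hA1 : 1 ≤ A.natDegree := by omega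
  have hA' := derivative_ne hA1
  have hnd : A.derivative.roots.Nodup := by
    rw [Multiset.nodup_iff_count_le_one]
    intro p
    have := h2 p
    rw [ramIdx_eq hA1] at this
    omega
  set R := A.derivative.roots.toFinset with hR
  have hfac : A.derivative = C A.derivative.leadingCoeff * ∏ p ∈ R, (X - C p) := by
    conv_lhs => rw [(IsAlgClosed.splits A.derivative).eq_prod_roots]
    rw [Finset.prod, hR, Multiset.toFinset_val, hnd.dedup]
  have hdvd : ∏ p ∈ R, (X - C p) ^ 2 ∣ (A - C c₁) * (A - C c₂) := by
    apply Finset.prod_dvd_of_coprime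
    · intro p _ q _ hpq
      exact (isCoprime_X_sub_C_of_isUnit_sub (sub_ne_zero_of_ne hpq).isUnit).pow
    · intro p hp
      rw [hR, Multiset.mem_toFinset] at hp
      have h3 := two_le_ramIdx hA1 hp
      have h4 : (X - C p) ^ 2 ∣ A - C (A.eval p) :=
        (pow_dvd_pow _ h3).trans (pow_rootMultiplicity_dvd _ _)
      rcases h p hp with h5 | h5
      · rw [h5] at h4; exact h4.mul_right _
      · rw [h5] at h4; exact h4.mul_left _
  obtain ⟨q₀, hq₀⟩ := hdvd
  set l := A.derivative.leadingCoeff with hl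
  have hl0 : l ≠ 0 := leadingCoeff_ne_zero.2 hA'
  set q := C ((l ^ 2)⁻¹) * q₀ with hq
  have hmain : (A - C c₁) * (A - C c₂) = q * A.derivative ^ 2 := by
    rw [hq₀, hfac, Finset.prod_pow, mul_pow, hq]
    have : C ((l ^ 2)⁻¹) * C l ^ 2 = (1 : ℂ[X]) := by
      rw [← C_pow, ← C_mul, inv_mul_cancel₀ (pow_ne_zero _ hl0), C_1]
    linear_combination -(q₀ * (∏ p ∈ R, (X - C p)) ^ 2) * this
  have hqd : q.natDegree = 2 := by
    have e := congrArg natDegree hmain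
    have hq0 : q ≠ 0 := by
      intro h0; rw [h0, zero_mul] at hmain
      exact mul_ne_zero (sub_C_ne_zero hA1 _) (sub_C_ne_zero hA1 _) hmain
    rw [natDegree_mul (sub_C_ne_zero hA1 _) (sub_C_ne_zero hA1 _), natDegree_sub_C, natDegree_sub_C,
      natDegree_mul hq0 (pow_ne_zero _ hA'), natDegree_pow, natDegree_derivative] at e
    omega
  have hcc : c₁ - c₂ ≠ 0 := sub_ne_zero.2 hne
  set t := 2 / (c₁ - c₂) with ht
  have ht0 : t ≠ 0 := div_ne_zero two_ne_zero hcc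
  set F := C t * A - C ((c₁ + c₂) / (c₁ - c₂)) with hF
  have hFd : F.natDegree = A.natDegree := by rw [hF, natDegree_sub_C, natDegree_C_mul ht0]
  have hpell : F ^ 2 - 1 = q * derivative F ^ 2 := by
    have e1 : F - 1 = C t * (A - C c₁) := by
      have : C ((c₁ + c₂) / (c₁ - c₂)) + 1 = C t * C c₁ := by
        rw [← C_1, ← C_add, ← C_mul]; congr 1; rw [ht]; field_simp; ring
      rw [hF]; linear_combination - this
    have e2 : F + 1 = C t * (A - C c₂) := by
      have : C ((c₁ + c₂) / (c₁ - c₂)) - 1 = C t * C c₂ := by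
        rw [← C_1, ← C_sub, ← C_mul]; congr 1; rw [ht]; field_simp; ring
      rw [hF]; linear_combination - this
    have e3 : derivative F = C t * derivative A := by
      rw [hF]; simp
    rw [e3]
    linear_combination (F + 1) * e1 + C t * (A - C c₁) * e2 + C t ^ 2 * hmain
  obtain ⟨l', g, d, hl', hg, hFg⟩ := cheb_of_quadratic (by omega) hqd hpell
  rw [hFd] at hFg
  refine ⟨t⁻¹ * l', t⁻¹ * ((c₁ + c₂) / (c₁ - c₂)), g, d, mul_ne_zero (inv_ne_zero ht0) hl', hg, ?_⟩
  rw [hF] at hFg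
  simp only [sub_comp, mul_comp, C_comp] at hFg
  have hti : C (t⁻¹) * C t = (1 : ℂ[X]) := by rw [← C_mul, inv_mul_cancel₀ ht0, C_1]
  rw [C_mul, C_mul]
  linear_combination C (t⁻¹) * hFg - A.comp (C g * X + C d) * hti

open Classical in
/-- A relation `A ∘ B = P ∘ Q` with `deg A`, `deg P` coprime and `deg P ≥ 12 deg A` forces `A` to be
`X ^ a` or `T_a` up to affine maps. The fiber of `P` over a critical value `A(u)` has at most
`deg P / ramIdx A u` points besides fewer than `2 * deg A` bad ones, whereas by Riemann-Hurwitz the fibers over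
`t` values together have more than `(t - 1) deg P`. This excludes three critical values, and also two
critical values one of which has a point of ramification index at least `3` above it. -/
theorem key_coprime {A B P Q : ℂ[X]} {r : ℕ} (hA : 2 ≤ A.natDegree)
    (hr : 1 ≤ r) (hco : Nat.Coprime A.natDegree P.natDegree)
    (hB : B.natDegree = P.natDegree * r) (hQ : Q.natDegree = A.natDegree * r)
    (h : A.comp B = P.comp Q) (hx : 12 * A.natDegree ≤ P.natDegree) :
    AffEquiv A (X ^ A.natDegree) ∨ AffEquiv A (Chebyshev.T ℂ (A.natDegree : ℤ)) := by
  have hA1 : 1 ≤ A.natDegree := by omega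
  have hP : 1 ≤ P.natDegree := by omega
  by_cases hone : ∀ p ∈ A.derivative.roots, ∀ q ∈ A.derivative.roots, A.eval p = A.eval q
  · exact Or.inl (pow_of_one_crit hA hone)
  right
  push Not at hone
  obtain ⟨u₁, hu₁, u₂, hu₂, hne⟩ := hone
  have hT3 : ∀ p ∈ A.derivative.roots, A.eval p = A.eval u₁ ∨ A.eval p = A.eval u₂ := by
    intro u₃ hu₃
    by_contra! hc
    have hs := rh_sum hP {A.eval u₁, A.eval u₂, A.eval u₃}
    have hb := bad_sum hA1 hP hr hco hB hQ h {A.eval u₁, A.eval u₂, A.eval u₃}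
    have n1 : A.eval u₁ ∉ ({A.eval u₂, A.eval u₃} : Finset ℂ) := by
      simp [hne, hc.1.symm]
    have n2 : A.eval u₂ ∉ ({A.eval u₃} : Finset ℂ) := by simp [hc.2.symm]
    rw [Finset.card_insert_of_notMem n1, Finset.card_insert_of_notMem n2, Finset.card_singleton,
      Finset.sum_insert n1, Finset.sum_insert n2, Finset.sum_singleton] at hs
    rw [Finset.sum_insert n1, Finset.sum_insert n2, Finset.sum_singleton] at hb
    have f1 := fiber_bound hP u₁ 2 (two_le_ramIdx hA1 hu₁)
    have f2 := fiber_bound hP u₂ 2 (two_le_ramIdx hA1 hu₂)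
    have f3 := fiber_bound hP u₃ 2 (two_le_ramIdx hA1 hu₃)
    omega
  have h32 : ∀ u v, u ∈ A.derivative.roots → v ∈ A.derivative.roots → A.eval u ≠ A.eval v →
      ramIdx A u ≤ 2 := by
    intro u v hu hv huv
    by_contra! hc
    have hs := rh_sum hP {A.eval u, A.eval v}
    have hb := bad_sum hA1 hP hr hco hB hQ h {A.eval u, A.eval v}
    have n1 : A.eval u ∉ ({A.eval v} : Finset ℂ) := by simp [huv]
    rw [Finset.card_insert_of_notMem n1, Finset.card_singleton,
      Finset.sum_insert n1, Finset.sum_singleton] at hs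
    rw [Finset.sum_insert n1, Finset.sum_singleton] at hb
    have f1 := fiber_bound hP u 3 hc
    have f2 := fiber_bound hP v 2 (two_le_ramIdx hA1 hv)
    omega
  refine cheb_of_two_crit hA _ _ hne hT3 fun p => ?_
  by_cases hp : p ∈ A.derivative.roots
  · by_cases hpe : A.eval p = A.eval u₁
    · exact h32 p u₂ hp hu₂ (by rw [hpe]; exact hne)
    · exact h32 p u₁ hp hu₁ hpe
  · rw [ramIdx_eq hA1, Multiset.count_eq_zero_of_notMem hp]; omega

/-! ### Rigidity of powers and Chebyshev polynomials -/

/-- A family of polynomials `E m` of degree `m` such that `E (d * m)` agrees with a multiple of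
`(E m) ^ d` above degree `(d - 1) * m`, as the powers and the Chebyshev polynomials do. Then
`E m` is recognised as an approximate root. -/
structure IsRigid (E : ℕ → ℂ[X]) : Prop where
  natDegree : ∀ m, (E m).natDegree = m
  pow : ∀ d m, 1 ≤ d → 1 ≤ m → ∃ κ : ℂ, κ ≠ 0 ∧ (E (d * m) - C κ * E m ^ d).degree < ((d - 1) * m : ℕ)

theorem isRigid_pow : IsRigid (fun m => X ^ m) where
  natDegree m := natDegree_X_pow m
  pow d m _ _ := ⟨1, one_ne_zero, by
    simp only [C_1, one_mul, ← pow_mul, mul_comm m d, sub_self, degree_zero]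
    exact WithBot.bot_lt_coe _⟩

theorem isRigid_cheb : IsRigid (fun m => Chebyshev.T ℂ (m : ℤ)) where
  natDegree m := by rw [Chebyshev.natDegree_T]; simp
  pow d m hd hm := by
    set T := Chebyshev.T ℂ (d : ℤ) with hT
    have hTd : T.natDegree = d := by rw [hT, Chebyshev.natDegree_T]; simp
    have hT0 : T ≠ 0 := by intro h; rw [h] at hTd; simp at hTd; omega
    refine ⟨T.leadingCoeff, leadingCoeff_ne_zero.2 hT0, ?_⟩
    -- `T_d` has no term of degree `d - 1`, by the differential equation
    have hc : T.coeff (d - 1) = 0 := by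
      have h1 := ode_coeff T (d - 1) (by omega)
      rw [← T_ode, coeff_C_mul] at h1
      have h2 : ((d : ℂ) ^ 2 - ((d - 1 : ℕ) : ℂ) ^ 2) * T.coeff (d - 1) = 0 := by
        rw [sub_mul, sub_eq_zero]; exact h1
      refine (mul_eq_zero.1 h2).resolve_left fun h3 => ?_
      have h4 : d ^ 2 = (d - 1) ^ 2 := by
        have := sub_eq_zero.1 h3
        exact_mod_cast this
      have h5 := Nat.pow_left_injective (n := 2) (by norm_num) h4
      omega
    have hdeg : (T - C T.leadingCoeff * X ^ d).degree < ((d - 1 : ℕ) : WithBot ℕ) := by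
      rw [degree_lt_iff_coeff_zero]
      intro j hj
      rw [coeff_sub, coeff_C_mul, coeff_X_pow]
      rcases Nat.lt_or_ge d j with h | h
      · rw [coeff_eq_zero_of_natDegree_lt (by omega), if_neg (by omega)]; simp
      · rcases Nat.eq_or_lt_of_le h with h | h
        · rw [if_pos h, h, leadingCoeff, hTd]; simp
        · rw [show j = d - 1 by omega, hc, if_neg (by omega)]; simp
    have := degree_comp_lt (Q := Chebyshev.T ℂ (m : ℤ)) (m := m) hdeg
      (by rw [Chebyshev.natDegree_T]; simp) hm
    simp only [sub_comp, mul_comp, C_comp, pow_comp, X_comp] at this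
    push_cast
    rw [Chebyshev.T_mul]
    push_cast at this
    exact this

/-- A right factor of `W ∘ E a` of degree `m < a` is affinely equivalent on the left to `E m`. Up to
an affine map, `U` and `E m` are both approximate `d`-th roots of `W ∘ E a`, where `d = deg G`. -/
theorem IsRigid.rigid {E : ℕ → ℂ[X]} (hE : IsRigid E) {G U W : ℂ[X]} {a : ℕ}
    (hG : 1 ≤ G.natDegree) (hU : 1 ≤ U.natDegree) (ha : U.natDegree < a)
    (h : G.comp U = W.comp (E a)) : ∃ κ c : ℂ, κ ≠ 0 ∧ U = C κ * E U.natDegree + C c := by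
  set m := U.natDegree with hm
  set d := G.natDegree with hd
  have hdeg : d * m = W.natDegree * a := by
    have := congrArg Polynomial.natDegree h
    rwa [natDegree_comp, natDegree_comp, hE.natDegree] at this
  have hW1 : 1 ≤ W.natDegree := by
    by_contra h0
    have : W.natDegree = 0 := by omega
    rw [this, zero_mul] at hdeg
    have := Nat.mul_pos hG hU
    omega
  have hG0 : G ≠ 0 := by intro h0; rw [h0] at hd; simp at hd; omega
  have hW0 : W ≠ 0 := by rintro rfl; simp at hW1
  set N := (d - 1) * m with hN
  have hNd : N + m = d * m := by rw [hN]; conv_rhs => rw [← Nat.sub_add_cancel hG, add_mul, one_mul]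
  -- `G ∘ U` agrees with a multiple of `(U + c) ^ d` above degree `N`
  obtain ⟨H, hHm, hHd, hH⟩ := exists_approx_root (g := d) (e := 1) hG (by rw [mul_one]) hG0
  rw [mul_one] at hH
  have hGU := degree_comp_lt hH rfl hU
  obtain ⟨c, hc⟩ : ∃ c, H = X + C c := ⟨H.coeff 0, hHm.eq_X_add_C hHd⟩
  rw [hc, ← hm] at hGU
  simp only [sub_comp, mul_comp, C_comp, pow_comp, add_comp, X_comp] at hGU
  -- `W ∘ E a` agrees with a multiple of `(E a) ^ deg W` above degree `N`
  have hWE : (W.comp (E a) - C W.leadingCoeff * E a ^ W.natDegree).degree < (N : ℕ) := by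
    have h1 : W.comp (E a) - C W.leadingCoeff * E a ^ W.natDegree = W.eraseLead.comp (E a) := by
      have h2 := congrArg (fun S => S.comp (E a)) (eraseLead_add_C_mul_X_pow W)
      simp only [add_comp, mul_comp, C_comp, pow_comp, X_comp] at h2
      linear_combination -h2
    rw [h1]
    refine lt_of_le_of_lt degree_le_natDegree ?_
    rw [natDegree_comp, hE.natDegree]
    have h2 : W.eraseLead.natDegree * a ≤ (W.natDegree - 1) * a :=
      Nat.mul_le_mul_right _ (eraseLead_natDegree_le W)
    have h3 : (W.natDegree - 1) * a + a = W.natDegree * a := by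
      conv_rhs => rw [← Nat.sub_add_cancel hW1, add_mul, one_mul]
    exact_mod_cast (by omega : W.eraseLead.natDegree * a < N)
  obtain ⟨κ₁, hκ₁, h1⟩ := hE.pow W.natDegree a hW1 (by omega)
  obtain ⟨κ₂, hκ₂, h2⟩ := hE.pow d m hG hU
  rw [← hdeg] at h1
  have h1' : (E (d * m) - C κ₁ * E a ^ W.natDegree).degree < (N : ℕ) := by
    refine h1.trans_le ?_
    have h3 : (W.natDegree - 1) * a + a = W.natDegree * a := by
      conv_rhs => rw [← Nat.sub_add_cancel hW1, add_mul, one_mul]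
    exact_mod_cast (by omega : (W.natDegree - 1) * a ≤ N)
  set γ := G.leadingCoeff with hγ
  have hγ0 : γ ≠ 0 := leadingCoeff_ne_zero.2 hG0
  set ρ := W.leadingCoeff / κ₁ * κ₂ / γ with hρ
  have hρ0 : ρ ≠ 0 := div_ne_zero (mul_ne_zero (div_ne_zero (leadingCoeff_ne_zero.2 hW0) hκ₁) hκ₂) hγ0
  obtain ⟨δ, hδ⟩ := IsAlgClosed.exists_pow_nat_eq ρ (n := d) hG
  have hδ0 : δ ≠ 0 := by rintro rfl; rw [zero_pow (by omega)] at hδ; exact hρ0 hδ.symm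
  have hsmall : ((U + C c) ^ d - (C δ * E m) ^ d).degree < ((d - 1) * m : ℕ) := by
    set τ := W.leadingCoeff / κ₁ with hτ
    have e : C γ * ((U + C c) ^ d - (C δ * E m) ^ d) =
        -(G.comp U - C γ * (U + C c) ^ d) + (W.comp (E a) - C W.leadingCoeff * E a ^ W.natDegree)
        - C τ * (E (d * m) - C κ₁ * E a ^ W.natDegree) + C τ * (E (d * m) - C κ₂ * E m ^ d) := by
      have e1 : C τ * C κ₁ = C W.leadingCoeff := by rw [← C_mul, hτ, div_mul_cancel₀ _ hκ₁]
      have e2 : C γ * C δ ^ d = C τ * C κ₂ := by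
        rw [← C_pow, hδ, ← C_mul, ← C_mul, hρ, mul_div_cancel₀ _ hγ0]
      rw [mul_pow]
      linear_combination h - E m ^ d * e2 - E a ^ W.natDegree * e1
    rw [← degree_C_mul hγ0, e]
    have hC : ∀ S : ℂ[X], S.degree < (N : ℕ) → (C τ * S).degree < (N : ℕ) := fun S hS =>
      lt_of_le_of_lt (by
        rw [degree_mul]
        refine (add_le_add_left degree_C_le _).trans ?_
        rw [zero_add]) hS
    refine lt_of_le_of_lt (degree_add_le _ _) (max_lt ?_ (hC _ h2))
    refine lt_of_le_of_lt (degree_sub_le _ _) (max_lt ?_ (hC _ h1'))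
    refine lt_of_le_of_lt (degree_add_le _ _) (max_lt ?_ hWE)
    rw [degree_neg]; exact hGU
  obtain ⟨ω, hω, hUω⟩ := exists_root_smul hG (by rw [natDegree_add_C])
    (by rw [natDegree_C_mul hδ0, hE.natDegree]) hU hsmall
  refine ⟨ω * δ, -c, mul_ne_zero hω hδ0, ?_⟩
  rw [C_mul, C_neg]
  linear_combination hUω

/-! ### Recognising special polynomials -/

theorem polyIter_add (A : ℂ[X]) (i j : ℕ) :
    polyIter A (i + j) = (polyIter A i).comp (polyIter A j) := by
  induction i with
  | zero => simp [polyIter]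
  | succ i ih => rw [Nat.add_right_comm, polyIter, ih, polyIter, comp_assoc]

theorem polyIter_one (A : ℂ[X]) : polyIter A 1 = A := by simp [polyIter]

theorem natDegree_polyIter (A : ℂ[X]) (k : ℕ) : (polyIter A k).natDegree = A.natDegree ^ k := by
  induction k with
  | zero => simp [polyIter]
  | succ k ih => rw [polyIter, natDegree_comp, ih, pow_succ, mul_comm]

theorem polyIter_conj {A μ ν : ℂ[X]} (h1 : μ.comp ν = X) (h2 : ν.comp μ = X) (k : ℕ) :
    polyIter ((ν.comp A).comp μ) k = (ν.comp (polyIter A k)).comp μ := by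
  induction k with
  | zero => simp [polyIter, h2]
  | succ k ih =>
    rw [polyIter, ih, polyIter]
    simp only [comp_assoc]
    rw [← comp_assoc μ ν, h1, X_comp]

/-- A polynomial `κ X ^ n + c` whose second iterate has the same shape has `c = 0`, as the linear
term of `(κ X + c) ^ n` must vanish. -/
theorem special_of_power {B : ℂ[X]} {n : ℕ} (hn : 2 ≤ n) {κ c κ' c' : ℂ} (hκ : κ ≠ 0)
    (h1 : B = C κ * X ^ n + C c) (h2 : B.comp B = C κ' * X ^ (n ^ 2) + C c') :
    LinConj B (X ^ n) := by
  have hc : c = 0 := by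
    have h3 : (C κ * (C κ * X + C c) ^ n + C c).comp (X ^ n) = (C κ' * X ^ n + C c').comp (X ^ n) := by
      have h4 := h2
      rw [h1] at h4
      simp only [add_comp, mul_comp, C_comp, pow_comp, X_comp] at h4 ⊢
      rw [h4, ← pow_mul, sq]
    have h4 := comp_right_cancel (by rw [natDegree_X_pow]; omega) h3
    have h5 := congrArg (fun S => eval 0 (derivative S)) h4
    obtain ⟨m, rfl⟩ : ∃ m, n = m + 2 := ⟨n - 2, by omega⟩
    have h6 : (κ * ((((m + 2 : ℕ) : ℂ)) * c ^ (m + 1) * κ)) = 0 := by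
      simpa [derivative_pow] using h5
    have h7 : ((m + 2 : ℕ) : ℂ) ≠ 0 := Nat.cast_ne_zero.2 (by omega)
    by_contra hc
    exact (mul_ne_zero hκ (mul_ne_zero (mul_ne_zero h7 (pow_ne_zero _ hc)) hκ)) h6
  obtain ⟨t, ht⟩ := IsAlgClosed.exists_pow_nat_eq κ⁻¹ (n := n - 1) (by omega)
  have ht0 : t ≠ 0 := by
    rintro rfl; rw [zero_pow (by omega)] at ht; exact inv_ne_zero hκ ht.symm
  refine ⟨C t * X, degree_C_mul_X ht0, ?_⟩
  rw [h1, hc]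
  simp only [C_0, add_zero, mul_comp, C_comp, pow_comp, X_comp, mul_pow]
  have : κ * t ^ n = t := by
    rw [← Nat.sub_add_cancel (show 1 ≤ n by omega), pow_succ, ht]; field_simp
  rw [← mul_assoc, ← C_pow, ← C_mul, this]

/-- An affine change of variable taking `T_m` to an affine image of `T_m` is `± X`, up to the
exception `m = 2`, where the scalar is free. -/
theorem cheb_rigid {m : ℕ} (hm : 2 ≤ m) {α β α' β' : ℂ} (hα : α ≠ 0)
    (h : C α * (Chebyshev.T ℂ (m : ℤ)).comp (C α * X + C β) + C β
      = C α' * Chebyshev.T ℂ (m : ℤ) + C β') : β = 0 ∧ (3 ≤ m → α ^ 2 = 1) := by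
  have hode := T_ode m
  set T := Chebyshev.T ℂ (m : ℤ) with hT
  have hTd : T.natDegree = m := by rw [hT, Chebyshev.natDegree_T]; simp
  have hT0 : T ≠ 0 := by intro h; rw [h] at hTd; simp at hTd; omega
  have ht0 : T.coeff m ≠ 0 := by
    rw [← hTd]; exact leadingCoeff_ne_zero.2 hT0
  have hα' : α' ≠ 0 := by
    rintro rfl
    have h1 := congrArg natDegree h
    rw [natDegree_add_C, natDegree_C_mul hα, natDegree_comp, natDegree_linear hα, hTd] at h1
    simp at h1; omega
  set L := C α * X + C β with hL
  have d1 : C α * (C α * (derivative T).comp L) = C α' * derivative T := by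
    have := congrArg derivative h
    simp only [derivative_add, derivative_mul, derivative_C, derivative_comp, hL, derivative_X] at this
    rw [hL]; linear_combination this
  have d2 : C α * (C α * (C α * (derivative (derivative T)).comp L)) = C α' * derivative (derivative T) := by
    have := congrArg derivative d1
    simp only [derivative_mul, derivative_C, derivative_comp, hL, derivative_X, derivative_add] at this
    rw [hL]; linear_combination this
  have hodeL : C ((m : ℂ) ^ 2) * T.comp L = L * (derivative T).comp L
      + (L ^ 2 - 1) * (derivative (derivative T)).comp L := by
    have := congrArg (fun S => S.comp L) hode
    simpa only [add_comp, mul_comp, sub_comp, C_comp, pow_comp, X_comp, one_comp] using this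
  -- the differential equation of `T` compared with its translate under `L`
  have main : C ((m : ℂ) ^ 2 * α ^ 2 * (β' - β)) = C (α' * (α * β)) * derivative T
      + C (α' * (2 * α * β)) * (X * derivative (derivative T))
      + C (α' * (β ^ 2 - 1 + α ^ 2)) * derivative (derivative T) := by
    simp only [C_mul, C_add, C_sub, C_pow, C_1, map_ofNat] at hode hodeL ⊢
    have hL' : L = C α * X + C β := hL
    have e : C α * T.comp L = C α' * T + C β' - C β := by linear_combination h
    linear_combination (C α ^ 3) * hodeL - (C α ^ 2 * C (m : ℂ) ^ 2) * e + C α * L * d1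
      + (L ^ 2 - 1) * d2 - C α ^ 2 * C α' * hode
      + (C α' * derivative T * C α  + C α' * derivative (derivative T) * (L + C α * X + C β)) * hL'
  have hβ : β = 0 := by
    obtain ⟨k, rfl⟩ : ∃ k, m = k + 2 := ⟨m - 2, by omega⟩
    have h1 := congrArg (fun S => S.coeff (k + 1)) main
    simp only [coeff_add, coeff_C_mul, coeff_X_mul, coeff_derivative, coeff_C_succ] at h1
    rw [coeff_eq_zero_of_natDegree_lt (n := k + 1 + 1 + 1) (by omega)] at h1
    have h2 : α' * α * T.coeff (k + 2) * (((k + 2 : ℕ) : ℂ) * ((2 * k + 3 : ℕ) : ℂ)) * β = 0 := by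
      push_cast at h1 ⊢
      linear_combination -h1
    have h3 : ((k + 2 : ℕ) : ℂ) ≠ 0 := Nat.cast_ne_zero.2 (by omega)
    have h4 : ((2 * k + 3 : ℕ) : ℂ) ≠ 0 := Nat.cast_ne_zero.2 (by omega)
    exact (mul_eq_zero.1 h2).resolve_left
      (mul_ne_zero (mul_ne_zero (mul_ne_zero hα' hα) ht0) (mul_ne_zero h3 h4))
  refine ⟨hβ, fun hm3 => ?_⟩
  obtain ⟨k, rfl⟩ : ∃ k, m = k + 3 := ⟨m - 3, by omega⟩
  have h1 := congrArg (fun S => S.coeff (k + 1)) main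
  simp only [hβ, coeff_add, coeff_C_mul, coeff_X_mul, coeff_derivative, coeff_C_succ] at h1
  have h2 : α' * T.coeff (k + 3) * (((k + 3 : ℕ) : ℂ) * ((k + 2 : ℕ) : ℂ)) * (α ^ 2 - 1) = 0 := by
    push_cast at h1 ⊢
    linear_combination -h1
  have h3 : ((k + 3 : ℕ) : ℂ) ≠ 0 := Nat.cast_ne_zero.2 (by omega)
  have h4 : ((k + 2 : ℕ) : ℂ) ≠ 0 := Nat.cast_ne_zero.2 (by omega)
  exact sub_eq_zero.1 ((mul_eq_zero.1 h2).resolve_left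
    (mul_ne_zero (mul_ne_zero hα' ht0) (mul_ne_zero h3 h4)))

/-- The preceding rigidity applied to the second iterate of an affine image of `T_m`. -/
theorem cheb_rigid' {B : ℂ[X]} {m : ℕ} (hm : 2 ≤ m) {α β α' β' : ℂ} (hα : α ≠ 0)
    (h1 : B = C α * Chebyshev.T ℂ (m : ℤ) + C β)
    (h2 : B.comp B = C α' * Chebyshev.T ℂ ((m ^ 2 : ℕ) : ℤ) + C β') :
    (C α * (Chebyshev.T ℂ (m : ℤ)).comp (C α * X + C β) + C β
      = C α' * Chebyshev.T ℂ (m : ℤ) + C β') ∧ β = 0 ∧ (3 ≤ m → α ^ 2 = 1) := by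
  have h : C α * (Chebyshev.T ℂ (m : ℤ)).comp (C α * X + C β) + C β
      = C α' * Chebyshev.T ℂ (m : ℤ) + C β' := by
    apply comp_right_cancel (Q := Chebyshev.T ℂ (m : ℤ))
    · rw [Chebyshev.natDegree_T]; simp; omega
    · have e : Chebyshev.T ℂ ((m ^ 2 : ℕ) : ℤ) = (Chebyshev.T ℂ (m : ℤ)).comp (Chebyshev.T ℂ (m : ℤ)) := by
        rw [← Chebyshev.T_mul]; congr 1; push_cast; ring
      rw [e] at h2
      rw [h1] at h2
      simp only [add_comp, mul_comp, C_comp, X_comp, comp_assoc] at h2 ⊢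
      exact h2
  exact ⟨h, cheb_rigid hm hα h⟩

/-- The fourth iterate serves for degree two, where `T_2` itself does not bound the scalar: the
rigidity of `T_4` applied to `B ∘ B` gives it. -/
theorem special_of_cheb {B : ℂ[X]} {n : ℕ} (hn : 2 ≤ n)
    {α₁ β₁ α₂ β₂ α₄ β₄ : ℂ} (hα₁ : α₁ ≠ 0) (hα₂ : α₂ ≠ 0)
    (h1 : B = C α₁ * Chebyshev.T ℂ (n : ℤ) + C β₁)
    (h2 : B.comp B = C α₂ * Chebyshev.T ℂ ((n ^ 2 : ℕ) : ℤ) + C β₂)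
    (h4 : (B.comp B).comp (B.comp B) = C α₄ * Chebyshev.T ℂ ((n ^ 4 : ℕ) : ℤ) + C β₄) :
    LinConj B (Chebyshev.T ℂ (n : ℤ)) ∨ LinConj B (-Chebyshev.T ℂ (n : ℤ)) := by
  have hn2 : 4 ≤ n ^ 2 := by nlinarith
  obtain ⟨_, hβ₂, hsq⟩ := cheb_rigid' (by omega) hα₂ h2 (by rw [← pow_mul]; exact h4)
  have hα₂2 := hsq (by omega)
  obtain ⟨he, hβ₁, hsq₁⟩ := cheb_rigid' hn hα₁ h1 h2
  have hα : α₁ ^ 2 = 1 := by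
    by_cases h3 : 3 ≤ n
    · exact hsq₁ h3
    · have : n = 2 := by omega
      subst this
      rw [hβ₁, hβ₂] at he
      have e1 := congrArg (eval 0) he
      simp [Chebyshev.T_two] at e1
      rw [e1]; exact hα₂2
  rw [hβ₁, C_0, add_zero] at h1
  rcases mul_self_eq_one_iff.1 ((sq _).symm.trans hα) with h | h
  · left
    refine ⟨X, degree_X, ?_⟩
    rw [h1, h]; simp
  · right
    refine ⟨X, degree_X, ?_⟩
    rw [h1, h]; simp

/-! ### Left factors of iterates -/

/-- If a long iterate of `B` is `W ∘ E a`, all short iterates of `B` are affine images of members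
of the family. -/
theorem iter_form {E : ℕ → ℂ[X]} (hE : IsRigid E) {B W : ℂ[X]} {k a : ℕ} (hB : 2 ≤ B.natDegree)
    (hk : 4 ≤ k) (ha : B.natDegree ^ 4 < a) (h : polyIter B k = W.comp (E a)) (j : ℕ) (hj : j ≤ 4) :
    ∃ κ c : ℂ, κ ≠ 0 ∧ polyIter B j = C κ * E (B.natDegree ^ j) + C c := by
  have h1 : (polyIter B (k - j)).comp (polyIter B j) = W.comp (E a) := by
    rw [← polyIter_add, Nat.sub_add_cancel (by omega), h]
  have hpos : ∀ i, 1 ≤ (polyIter B i).natDegree := fun i => by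
    rw [natDegree_polyIter]; exact Nat.one_le_pow _ _ (by omega)
  have := hE.rigid (hpos _) (hpos _) (lt_of_le_of_lt (by
    rw [natDegree_polyIter]; exact Nat.pow_le_pow_right (by omega) hj) ha) h1
  rwa [natDegree_polyIter] at this

/-- Conjugating `A` by the inner affine map replaces the right factor by `E` itself. -/
theorem conj_of_affEquiv {A W A₁ E : ℂ[X]} {k : ℕ} (h : polyIter A k = W.comp A₁)
    (hE : AffEquiv A₁ E) :
    ∃ μ B W' : ℂ[X], μ.natDegree = 1 ∧ A.comp μ = μ.comp B ∧ B.natDegree = A.natDegree ∧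
      polyIter B k = W'.comp E := by
  obtain ⟨l, c, g, d, hl, hg, he⟩ := hE
  set μ := C g * X + C d with hμ
  set ν := C g⁻¹ * X + C (-(g⁻¹ * d)) with hν
  have hgg : C g * C g⁻¹ = (1 : ℂ[X]) := by rw [← C_mul, mul_inv_cancel₀ hg, C_1]
  have h1 : μ.comp ν = X := by
    rw [hμ, hν]; simp only [add_comp, mul_comp, C_comp, X_comp, C_neg, C_mul]
    linear_combination (X - C d) * hgg
  have h2 : ν.comp μ = X := by
    rw [hμ, hν]; simp only [add_comp, neg_comp, mul_comp, C_comp, X_comp, C_neg, C_mul]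
    linear_combination X * hgg
  have hμd : μ.natDegree = 1 := natDegree_linear hg
  have hνd : ν.natDegree = 1 := natDegree_linear (inv_ne_zero hg)
  refine ⟨μ, (ν.comp A).comp μ, (ν.comp W).comp (C l * X + C c), hμd, ?_, ?_, ?_⟩
  · rw [comp_assoc ν, ← comp_assoc μ, h1, X_comp]
  · rw [natDegree_comp, natDegree_comp, hμd, hνd]; ring
  · rw [polyIter_conj h1 h2, h]
    simp only [comp_assoc]
    rw [he]; simp

theorem LinConj.of_conj {A B P μ : ℂ[X]} (hμ : μ.natDegree = 1) (h : A.comp μ = μ.comp B)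
    (hB : LinConj B P) : LinConj A P := by
  obtain ⟨m, hm, hm'⟩ := hB
  have hm1 : m.natDegree = 1 := natDegree_eq_of_degree_eq_some hm
  refine ⟨μ.comp m, ?_, ?_⟩
  · exact (degree_eq_iff_natDegree_eq_of_pos one_pos).2 (by rw [natDegree_comp, hμ, hm1, one_mul])
  · rw [← comp_assoc, h, comp_assoc, hm', comp_assoc]

/-- If an iterate of `A` has a right factor of degree exceeding `(deg A) ^ 4` that is a power or a
Chebyshev polynomial up to affine maps, then `A` is special. -/
theorem special_of_affEquiv {A W A₁ : ℂ[X]} {k : ℕ} (hA : 2 ≤ A.natDegree) (hk : 4 ≤ k)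
    (ha : A.natDegree ^ 4 < A₁.natDegree) (h : polyIter A k = W.comp A₁)
    (hE : AffEquiv A₁ (X ^ A₁.natDegree) ∨ AffEquiv A₁ (Chebyshev.T ℂ (A₁.natDegree : ℤ))) :
    SpecialPoly A := by
  have p2 : ∀ B : ℂ[X], polyIter B 2 = B.comp B := fun B => by simp [polyIter]
  have p4 : ∀ B : ℂ[X], polyIter B 4 = (B.comp B).comp (B.comp B) := fun B => by
    rw [show 4 = 2 + 2 from rfl, polyIter_add, p2]
  rcases hE with hE | hE
  · obtain ⟨μ, B, W', hμ, hc, hB, hW⟩ := conj_of_affEquiv h hE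
    rw [← hB] at hA ha
    obtain ⟨κ, c, hκ, h1⟩ := iter_form isRigid_pow hA hk ha hW 1 (by omega)
    obtain ⟨κ', c', -, h2⟩ := iter_form isRigid_pow hA hk ha hW 2 (by omega)
    rw [polyIter_one, pow_one] at h1
    rw [p2] at h2
    left
    rw [← hB]
    exact (special_of_power hA hκ h1 h2).of_conj hμ hc
  · obtain ⟨μ, B, W', hμ, hc, hB, hW⟩ := conj_of_affEquiv h hE
    rw [← hB] at hA ha
    obtain ⟨κ, c, hκ, h1⟩ := iter_form isRigid_cheb hA hk ha hW 1 (by omega)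
    obtain ⟨κ', c', hκ', h2⟩ := iter_form isRigid_cheb hA hk ha hW 2 (by omega)
    obtain ⟨κ'', c'', -, h4⟩ := iter_form isRigid_cheb hA hk ha hW 4 (by omega)
    rw [polyIter_one, pow_one] at h1
    rw [p2] at h2
    rw [p4] at h4
    right
    rw [← hB]
    exact (special_of_cheb hA hκ hκ' h1 h2 h4).imp (fun h => h.of_conj hμ hc)
      (fun h => h.of_conj hμ hc)

/-- A left factor `X` of large degree of an iterate of a non-special `A` has degree divisible by
`deg A`. Otherwise some prime divides `deg X` less often than `deg A`, so that splitting off the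
common left factor of `A^{∘k}` and `X` leaves a right factor `A₁` of `A^{∘k}` whose degree is divisible
by `p ^ k`, to which `key_coprime` applies. -/
theorem natDegree_dvd_of_large {A X Y : ℂ[X]} {s : ℕ} (hA : 2 ≤ A.natDegree)
    (hsp : ¬ SpecialPoly A) (h : polyIter A s = X.comp Y)
    (hM : 12 * A.natDegree ^ (2 * (A.natDegree ^ 4 + 4)) < X.natDegree) :
    A.natDegree ∣ X.natDegree := by
  set n := A.natDegree with hn
  set k := n ^ 4 + 4 with hk
  have hn0 : 0 < n := by omega
  have hdeg : X.natDegree * Y.natDegree = n ^ s := by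
    rw [← natDegree_comp, ← h, natDegree_polyIter]
  have hpk : 0 < n ^ k := Nat.pow_pos hn0
  have hX1 : 1 ≤ X.natDegree := by omega
  have hY1 : 1 ≤ Y.natDegree := by
    rw [Nat.one_le_iff_ne_zero]; intro h0; rw [h0, mul_zero] at hdeg
    exact (Nat.pow_pos hn0 (n := s)).ne hdeg
  have hks : k < s := by
    by_contra! hc
    have h1 : X.natDegree ≤ n ^ s := Nat.le_of_dvd (Nat.pow_pos hn0) (Dvd.intro _ hdeg)
    have h2 : n ^ s ≤ n ^ (2 * k) := Nat.pow_le_pow_right hn0 (by omega)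
    omega
  by_contra hnd
  obtain ⟨p, hp, hv⟩ : ∃ p : ℕ, p.Prime ∧ X.natDegree.factorization p < n.factorization p := by
    by_contra! hc
    apply hnd
    rw [← Nat.factorization_le_iff_dvd (by omega) (by omega)]
    intro p
    by_cases hp : p.Prime
    · exact hc p hp
    · rw [Nat.factorization_eq_zero_of_not_prime _ hp]; exact Nat.zero_le _
  have hposk : ∀ i, 1 ≤ (polyIter A i).natDegree := fun i => by
    rw [natDegree_polyIter]; exact Nat.one_le_pow _ _ hn0
  obtain ⟨W, A₁, X₁, hW, hXW, hcomp, hco⟩ := engstrom (A := polyIter A k) (B := polyIter A (s - k))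
    (P := X) (Q := Y) (hposk _) hX1 (hposk _) hY1
    (by rw [← polyIter_add, Nat.add_sub_cancel' hks.le, h])
  have d1 : W.natDegree * A₁.natDegree = n ^ k := by
    rw [← natDegree_comp, ← hW, natDegree_polyIter]
  have d2 : W.natDegree * X₁.natDegree = X.natDegree := by rw [← natDegree_comp, ← hXW]
  have d3 : A₁.natDegree * n ^ (s - k) = X₁.natDegree * Y.natDegree := by
    rw [hn, ← natDegree_polyIter, ← natDegree_comp, hcomp, natDegree_comp]
  have hA10 : A₁.natDegree ≠ 0 := by intro h0; rw [h0, mul_zero] at d1; omega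
  have hW0 : W.natDegree ≠ 0 := by intro h0; rw [h0, zero_mul] at d1; omega
  have hX10 : X₁.natDegree ≠ 0 := by intro h0; rw [h0, mul_zero] at d2; omega
  -- `v_p(deg W) ≤ v_p(deg X) ≤ v_p(n) - 1`, while `v_p(deg W) + v_p(deg A₁) = k * v_p(n)`
  have hval : k ≤ A₁.natDegree.factorization p := by
    have f1 := congrArg (fun m => m.factorization p) d1
    have f2 := congrArg (fun m => m.factorization p) d2
    simp only [Nat.factorization_mul hW0 hA10, Nat.factorization_mul hW0 hX10,
      Nat.factorization_pow, Finsupp.add_apply, Finsupp.smul_apply, smul_eq_mul] at f1 f2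
    have hk1 : 1 ≤ k := by omega
    have f3 : k * (n.factorization p) = k * (n.factorization p - 1) + k := by
      conv_lhs => rw [← Nat.sub_add_cancel (show 1 ≤ n.factorization p by omega), mul_add, mul_one]
    have f4 : n.factorization p - 1 ≤ k * (n.factorization p - 1) := Nat.le_mul_of_pos_left _ hk1
    omega
  have hbig : n ^ 4 < A₁.natDegree := by
    have g1 : p ^ k ≤ A₁.natDegree := Nat.le_of_dvd (by omega)
      ((Nat.pow_dvd_pow p hval).trans (Nat.ordProj_dvd _ _))
    have g2 : 2 ^ k ≤ p ^ k := Nat.pow_le_pow_left hp.two_le k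
    have g3 : k < 2 ^ k := Nat.lt_two_pow_self
    omega
  have hx : 12 * A₁.natDegree ≤ X₁.natDegree := by
    have g1 : A₁.natDegree ≤ n ^ k := Nat.le_of_dvd hpk (Dvd.intro_left _ d1)
    have g2 : W.natDegree ≤ n ^ k := Nat.le_of_dvd hpk (Dvd.intro _ d1)
    have g3 : 12 * n ^ k * n ^ k < X₁.natDegree * n ^ k := by
      calc 12 * n ^ k * n ^ k = 12 * n ^ (2 * k) := by ring
        _ < X.natDegree := hM
        _ = X₁.natDegree * W.natDegree := by rw [← d2, mul_comm]
        _ ≤ _ := Nat.mul_le_mul_left _ g2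
    have g4 := Nat.lt_of_mul_lt_mul_right g3
    omega
  obtain ⟨r, hr⟩ : X₁.natDegree ∣ n ^ (s - k) :=
    hco.symm.dvd_of_dvd_mul_left (Dvd.intro _ d3.symm)
  have hr1 : 1 ≤ r := by
    rw [Nat.one_le_iff_ne_zero]; rintro rfl
    rw [mul_zero] at hr; exact (Nat.pow_pos hn0 (n := s - k)).ne' hr
  have hY : Y.natDegree = A₁.natDegree * r := by
    apply Nat.eq_of_mul_eq_mul_left (Nat.pos_of_ne_zero hX10)
    rw [← d3, hr]; ring
  have hn4 : 1 ≤ n ^ 4 := Nat.one_le_pow _ _ hn0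
  have key := key_coprime (A := A₁) (P := X₁) (by omega) hr1 hco
    (by rw [natDegree_polyIter, ← hn, hr]) hY hcomp hx
  exact hsp (special_of_affEquiv hA (by omega) hbig hW key)

/-- A left factor of `A^{∘(s+1)}` of degree divisible by `deg A` has `A` as a left factor. The
cancellation of `A` on the left holds up to an affine map `μ` with `A ∘ μ = A`, which is absorbed
into the new left factor. -/
theorem exists_strip {A X Y : ℂ[X]} {s : ℕ} (hA : 2 ≤ A.natDegree)
    (h : polyIter A (s + 1) = X.comp Y) (hdvd : A.natDegree ∣ X.natDegree) :
    ∃ X' : ℂ[X], X = A.comp X' ∧ polyIter A s = X'.comp Y := by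
  have hn0 : 0 < A.natDegree := by omega
  have hdeg : X.natDegree * Y.natDegree = A.natDegree ^ (s + 1) := by
    rw [← natDegree_comp, ← h, natDegree_polyIter]
  have hpos : 0 < A.natDegree ^ (s + 1) := Nat.pow_pos hn0
  have hX1 : 1 ≤ X.natDegree := by
    rw [Nat.one_le_iff_ne_zero]; intro h0; rw [h0, zero_mul] at hdeg; omega
  have hY1 : 1 ≤ Y.natDegree := by
    rw [Nat.one_le_iff_ne_zero]; intro h0; rw [h0, mul_zero] at hdeg; omega
  have hs1 : 1 ≤ (polyIter A s).natDegree := by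
    rw [natDegree_polyIter]; exact Nat.one_le_pow _ _ hn0
  rw [polyIter] at h
  obtain ⟨W, A₁, X₁, hW, hXW, hcomp, hco⟩ := engstrom (by omega) hX1 hs1 hY1 h
  have d1 : W.natDegree * A₁.natDegree = A.natDegree := by rw [← natDegree_comp, ← hW]
  have d2 : W.natDegree * X₁.natDegree = X.natDegree := by rw [← natDegree_comp, ← hXW]
  have hW0 : 0 < W.natDegree := by
    rw [Nat.pos_iff_ne_zero]; intro h0; rw [h0, zero_mul] at d1; omega
  have hA1 : A₁.natDegree = 1 := by
    rw [← d1, ← d2] at hdvd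
    have := Nat.dvd_of_mul_dvd_mul_left hW0 hdvd
    exact Nat.eq_one_of_dvd_coprimes hco (dvd_refl _) this
  obtain ⟨g, hg, d, hgd⟩ : ∃ g : ℂ, g ≠ 0 ∧ ∃ d : ℂ, A₁ = C g * Polynomial.X + C d := by
    refine ⟨A₁.coeff 1, ?_, A₁.coeff 0, eq_X_add_C_of_natDegree_le_one hA1.le⟩
    rw [← hA1]
    exact leadingCoeff_ne_zero.2 (by rintro rfl; simp at hA1)
  set X'' := (C g⁻¹ * Polynomial.X + C (-(g⁻¹ * d))).comp X₁ with hX''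
  have hgg : C g * C g⁻¹ = (1 : ℂ[X]) := by rw [← C_mul, mul_inv_cancel₀ hg, C_1]
  have e1 : A₁.comp X'' = X₁ := by
    rw [hX'', hgd]; simp only [add_comp, neg_comp, mul_comp, C_comp, X_comp, C_neg, C_mul]
    linear_combination (X₁ - C d) * hgg
  have e2 : X = A.comp X'' := by
    rw [hW, comp_assoc, e1, ← hXW]
  have e3 : A.comp (polyIter A s) = A.comp (X''.comp Y) := by rw [h, e2, comp_assoc]
  obtain ⟨η, β, hη, hμ⟩ := exists_affine_of_comp_eq (by omega) hs1 e3
  have hXY1 : 1 ≤ (X''.comp Y).natDegree := by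
    have := congrArg natDegree hμ
    rw [natDegree_comp, natDegree_linear hη, one_mul] at this
    omega
  have e4 : A.comp (C η * Polynomial.X + C β) = A := by
    apply comp_right_cancel hXY1
    rw [comp_assoc, ← hμ, e3]
  refine ⟨(C η * Polynomial.X + C β).comp X'', ?_, ?_⟩
  · rw [← comp_assoc, e4, e2]
  · rw [hμ]; exact (comp_assoc _ _ _).symm

theorem left_factors_of_iterates_bounded
    (A : Polynomial ℂ) (hA : 2 ≤ A.natDegree) (hAsp : ¬ SpecialPoly A) :
    ∃ M : ℕ, ∀ s : ℕ, 1 ≤ s →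
      ∀ X Y : Polynomial ℂ, polyIter A s = X.comp Y →
        ∃ (X₀ : Polynomial ℂ) (ℓ : ℕ), X₀.natDegree ≤ M ∧ ℓ ≤ s ∧
          X = (polyIter A ℓ).comp X₀ ∧ polyIter A (s - ℓ) = X₀.comp Y := by
  set M := 12 * A.natDegree ^ (2 * (A.natDegree ^ 4 + 4)) with hM
  refine ⟨M, fun s hs1 => ?_⟩
  clear hs1
  induction s with
  | zero =>
    intro X Y h
    refine ⟨X, 0, ?_, le_rfl, by simp [polyIter], h⟩
    have hd := congrArg natDegree h
    rw [natDegree_comp, natDegree_polyIter, pow_zero] at hd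
    rw [Nat.eq_one_of_mul_eq_one_right hd.symm]
    have := Nat.one_le_pow (2 * (A.natDegree ^ 4 + 4)) A.natDegree (by omega)
    omega
  | succ s ih =>
    intro X Y h
    by_cases hX : X.natDegree ≤ M
    · exact ⟨X, 0, hX, Nat.zero_le _, by simp [polyIter], h⟩
    obtain ⟨X', hX', hs⟩ := exists_strip hA h
      (natDegree_dvd_of_large hA hAsp h (not_le.1 hX))
    obtain ⟨X₀, l, h1, h2, h3, h4⟩ := ih X' Y hs
    refine ⟨X₀, l + 1, h1, by omega, ?_, ?_⟩
    · rw [hX', h3, polyIter, comp_assoc]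
    · rw [Nat.add_sub_add_right, h4]
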